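/- Let d ≥ 2, T > 0, let g : ℤ^d → ℝ^d be compactly supported, and let u ∈ ℓ²(ℤ^d) be the unique solution of (1/T)u + ∇*∇u = ∇*g on ℤ^d. Then for all 1 < p < ∞ and all 0 ≤ γ < min{d(p−1), 1/2}, one has Σ_{x∈ℤ^d} |∇u(x)|^p (|x|+1)^γ ≤ C(d,p,γ) Σ_{x∈ℤ^d} |g(x)|^p (|x|+1)^γ, with a constant depending only on d, p and γ (in particular independent of T). -/

import Mathlib

/-!
Write `avg` for the Markov operator of a lazy nearest-neighbour walk, so that `∇*∇ = 8d (1 - avg)`.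
The resolvent equation becomes `u = r avg u + c ∇*g` with `0 ≤ r < 1`, and inserting it once into
itself gives `u = r² avg² u + ∑ⱼ ∇ⱼ* hⱼ`, with `hⱼ` controlled by `g`. Iterating,
`∇ᵢ u = lim_M ∑ⱼ T_M hⱼ` where `T_M = opT (r²) M i j` is the truncated series
`∑_{k < M} r^{2k} ∇ᵢ ∇ⱼ* avg^{2k}` (`tendsto_opT`). It remains to bound `T_M` on the weighted `ℓ^p`
space, uniformly in `r ≤ 1` and `M`; this is what makes the constant independent of `T`.

*Unweighted bound* (`lp_bound`). Since `avg` is self-adjoint, `⟨h, T_M f⟩` is a space-time sum of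
products of first differences of `avg^k h` and `avg^k f`. The bilinear embedding `bilinear` bounds
it by `‖f‖_p^p + ‖h‖_q^q`. By symmetry, and after splitting into positive and negative parts, let
`q ≤ 2` and `f, g ≥ 0`; put `G = g + f^(p-1)`. The functionals `∑ G_k^q` and `∑ f_k² G_k^(2-q)`
telescope along the walk with a gain (`square_bound`, `mixed_bound`), and the two gains carry the
reciprocal weights `G^(q-2)` and `G^(2-q)`, so Young's inequality combines them. The gains come from
the one-step inequalities `jensen_gain` and `mixed_gain`; the laziness of the walk enters through
`le_avg`, which bounds a nonnegative function near a point by a multiple of its average there.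

*Kernel bound* (`kernel_bound`). The kernel of `T_M` is at most `C (1 + |x|)^(-d)`, by summing over
`k` the bound `heat_diff_bound` for second differences of the heat kernel, which follows from the
Fourier representation by a shift of the contour.

*Weight* (`weighted_bound`). Conjugation of `T_M` by `(1 + |x|)^(γ/p)` differs from `T_M` by an
operator whose kernel is dominated by `commK`. Schur's test with a power as test function bounds it
on `ℓ^p` (`commK_bound`); an admissible power exists precisely because `γ < d (p - 1)`.
-/

open MeasureTheory
open scoped ENNReal

namespace StochHom

noncomputable section


/-- The lattice `ℤ^d`. -/
abbrev Lat (d : ℕ) := Fin d → ℤ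

/-- The `i`-th coordinate unit vector of `ℤ^d`. -/
def unitv (d : ℕ) (i : Fin d) : Lat d := fun j => if j = i then 1 else 0

/-- Euclidean norm of a vector in `ℝ^d`. -/
noncomputable def vnorm {d : ℕ} (v : Fin d → ℝ) : ℝ := Real.sqrt (∑ i, (v i) ^ 2)

/-- Euclidean norm of a lattice point. -/
noncomputable def latnorm {d : ℕ} (x : Lat d) : ℝ := vnorm (fun i => (x i : ℝ))

/-- Discrete gradient `∇u(x) = (u(x+eᵢ) - u(x))ᵢ`. -/
def dgrad {d : ℕ} (u : Lat d → ℝ) (x : Lat d) : Fin d → ℝ :=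
  fun i => u (x + unitv d i) - u x

/-- Discrete negative divergence `∇*g(x) = Σᵢ (gᵢ(x-eᵢ) - gᵢ(x))`. -/
def ddiv {d : ℕ} (g : Lat d → Fin d → ℝ) (x : Lat d) : ℝ :=
  ∑ i, (g (x - unitv d i) i - g x i)

/-- Matrix-vector multiplication for a `d×d` matrix given as `Fin d → Fin d → ℝ`. -/
def mulVec' {d : ℕ} (A : Fin d → Fin d → ℝ) (v : Fin d → ℝ) : Fin d → ℝ :=
  fun i => ∑ j, A i j * v j

/-- The ellipticity condition defining `Ω₀`: `v·Av ≥ λ|v|²` and `|Av| ≤ |v|`. -/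
def IsElliptic (d : ℕ) (lam : ℝ) (A : Fin d → Fin d → ℝ) : Prop :=
  (∀ v : Fin d → ℝ, lam * ∑ i, (v i) ^ 2 ≤ ∑ i, v i * mulVec' A v i) ∧
  (∀ v : Fin d → ℝ, vnorm (mulVec' A v) ≤ vnorm v)

/-- The space `Ω = Ω₀^{ℤ^d}` of admissible coefficient fields. -/
abbrev Coeff (d : ℕ) (lam : ℝ) :=
  {a : Lat d → Fin d → Fin d → ℝ // ∀ x, IsElliptic d lam (a x)}

/-- Shift of a coefficient field: `(τ_z a)(x) = a(x+z)`. -/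
def shift {d : ℕ} {lam : ℝ} (z : Lat d) (a : Coeff d lam) : Coeff d lam :=
  ⟨fun x => a.1 (x + z), fun x => a.2 (x + z)⟩

/-- Stationarity of an ensemble: every shift is measure preserving. -/
def Stationary {d : ℕ} {lam : ℝ} (μ : Measure (Coeff d lam)) : Prop :=
  ∀ z : Lat d, MeasurePreserving (shift z) μ μ

/-- Coefficient fields agreeing with `a` outside of `x`. -/
def sameOutside {d : ℕ} {lam : ℝ} (a : Coeff d lam) (x : Lat d) :
    Set (Coeff d lam) :=
  {b | ∀ y, y ≠ x → b.1 y = a.1 y}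

/-- The oscillation `osc_{a(x)} ζ`. -/
noncomputable def osc {d : ℕ} {lam : ℝ} (ζ : Coeff d lam → ℝ) (a : Coeff d lam)
    (x : Lat d) : ℝ :=
  sSup (ζ '' sameOutside a x) - sInf (ζ '' sameOutside a x)

/-- Membership in `C_b(Ω)`: bounded continuous functions. -/
def MemCb {d : ℕ} {lam : ℝ} (ζ : Coeff d lam → ℝ) : Prop :=
  Continuous ζ ∧ ∃ M, ∀ a, |ζ a| ≤ M

/-- The logarithmic Sobolev inequality with constant `ρ`. -/
def SatisfiesLSI {d : ℕ} {lam : ℝ} (μ : Measure (Coeff d lam)) (ρ : ℝ) : Prop :=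
  ∀ ζ : Coeff d lam → ℝ, MemCb ζ →
    ∫ a, (ζ a) ^ 2 * Real.log ((ζ a) ^ 2 / ∫ b, (ζ b) ^ 2 ∂μ) ∂μ
      ≤ (1 / (2 * ρ)) * ∫ a, ∑' x : Lat d, (osc ζ a x) ^ 2 ∂μ

/-- The spectral gap inequality with constant `ρ`. -/
def SatisfiesSG {d : ℕ} {lam : ℝ} (μ : Measure (Coeff d lam)) (ρ : ℝ) : Prop :=
  ∀ ζ : Coeff d lam → ℝ, MemCb ζ →
    ∫ a, (ζ a - ∫ b, ζ b ∂μ) ^ 2 ∂μ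
      ≤ (1 / ρ) * ∫ a, ∑' x : Lat d, (osc ζ a x) ^ 2 ∂μ

/-- `φ` is a bounded solution of the modified corrector equation
`(1/T)φ + ∇*(a∇φ) = -∇*(aξ)` on `ℤ^d`. -/
def IsModCorrector (d : ℕ) (T : ℝ) (ξ : Fin d → ℝ)
    (a : Lat d → Fin d → Fin d → ℝ) (φ : Lat d → ℝ) : Prop :=
  (∃ M, ∀ x, |φ x| ≤ M) ∧
  ∀ x, (1 / T) * φ x + ddiv (fun y => mulVec' (a y) (dgrad φ y)) x
      = - ddiv (fun y => mulVec' (a y) ξ) x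

/-- `G` is the `ℓ²` Green's function of `(1/T) + ∇*(a∇·)` with pole at `y`. -/
def IsGreen (d : ℕ) (T : ℝ) (a : Lat d → Fin d → Fin d → ℝ) (y : Lat d)
    (G : Lat d → ℝ) : Prop :=
  Summable (fun x => (G x) ^ 2) ∧
  ∀ x, (1 / T) * G x + ddiv (fun z => mulVec' (a z) (dgrad G z)) x
      = if x = y then 1 else 0

/-- Spectral norm (Euclidean operator norm) of a `d×d` matrix. -/
noncomputable def specNorm {d : ℕ} (A : Fin d → Fin d → ℝ) : ℝ :=
  sSup {r : ℝ | ∃ v : Fin d → ℝ, vnorm v ≤ 1 ∧ r = vnorm (mulVec' A v)}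

/-! ### One-step convexity inequalities -/

section

lemma abs_rpow_sub_one_le {t θ : ℝ} (ht : 0 ≤ t) (h0 : 0 ≤ θ) (h1 : θ ≤ 1) :
    |t ^ θ - 1| ≤ |t - 1| := by
  rcases le_total t 1 with h | h
  · have a1 : t ^ θ ≤ 1 := Real.rpow_le_one ht h h0
    have a2 : t ≤ t ^ θ := by
      rcases ht.eq_or_lt with rfl | hpos
      · positivity
      · simpa using Real.rpow_le_rpow_of_exponent_ge hpos h h1
    rw [abs_of_nonpos (by linarith), abs_of_nonpos (by linarith)]
    linarith
  · have a1 : 1 ≤ t ^ θ := Real.one_le_rpow h h0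
    have a2 : t ^ θ ≤ t := by simpa using Real.rpow_le_rpow_of_exponent_le h h1
    rw [abs_of_nonneg (by linarith), abs_of_nonneg (by linarith)]
    linarith

lemma rpow_ge_quadratic {t θ : ℝ} (ht : 0 ≤ t) (h0 : 0 ≤ θ) (h1 : θ ≤ 1) :
    1 + θ * (t - 1) - (t - 1) ^ 2 ≤ t ^ θ := by
  rcases ht.eq_or_lt with rfl | hpos
  · have : (0:ℝ) ≤ 0 ^ θ := by positivity
    nlinarith
  · -- weighted AM-GM bounds `t ^ (1 - θ)` from above, and `t ^ θ = t / t ^ (1 - θ)`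
    have hag := Real.geom_mean_le_arith_mean2_weighted (w₁ := 1 - θ) (w₂ := θ) (p₁ := t) (p₂ := 1)
      (by linarith) h0 ht (by norm_num) (by ring)
    rw [Real.one_rpow, mul_one] at hag
    have hprod : t ^ (1 - θ) * t ^ θ = t := by
      rw [← Real.rpow_add hpos]; simp
    have hb : 0 < t ^ (1 - θ) := Real.rpow_pos_of_pos hpos _
    have hA : 0 < (1 - θ) * t + θ * 1 := lt_of_lt_of_le hb hag
    have hθ : 0 < t ^ θ := Real.rpow_pos_of_pos hpos _
    have h2 : t ≤ ((1 - θ) * t + θ * 1) * t ^ θ := by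
      calc t = t ^ (1 - θ) * t ^ θ := hprod.symm
        _ ≤ _ := by gcongr
    have h3 : t / ((1 - θ) * t + θ * 1) ≤ t ^ θ := by
      rw [div_le_iff₀ hA]; linarith
    refine le_trans ?_ h3
    rw [le_div_iff₀ hA]
    have : t - (1 + θ * (t - 1) - (t - 1) ^ 2) * ((1 - θ) * t + θ * 1)
        = (t - 1) ^ 2 * (((1 - θ) * t + θ) - θ * (1 - θ)) := by ring
    have h5 : 0 ≤ (t - 1) ^ 2 * (((1 - θ) * t + θ) - θ * (1 - θ)) := by
      apply mul_nonneg (sq_nonneg _)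
      have := mul_nonneg (sub_nonneg.2 h1) ht
      nlinarith
    linarith

/-- Uniform convexity of `t ^ q` on bounded intervals, for `q ≤ 2`. -/
lemma convexOn_rpow_sub_sq {q c₀ : ℝ} (hq1 : 1 < q) (hq2 : q ≤ 2) :
    ConvexOn ℝ (Set.Icc 0 c₀) (fun t : ℝ => t ^ q - (q * (q - 1) * c₀ ^ (q - 2) / 2) * t ^ 2) := by
  set c := q * (q - 1) * c₀ ^ (q - 2) / 2 with hc
  refine convexOn_of_hasDerivWithinAt2_nonneg (convex_Icc 0 c₀)
    (f' := fun t => q * t ^ (q - 1) - c * (2 * t)) (f'' := fun t => q * ((q - 1) * t ^ (q - 1 - 1)) - c * 2)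
    ?_ ?_ ?_ ?_
  · apply ContinuousOn.sub
    · exact (Real.continuous_rpow_const (by linarith)).continuousOn
    · fun_prop
  · intro x hx
    rw [interior_Icc] at hx
    apply HasDerivAt.hasDerivWithinAt
    have h1 := Real.hasDerivAt_rpow_const (x := x) (p := q) (Or.inl hx.1.ne')
    have h2 := (hasDerivAt_pow 2 x).const_mul c
    exact (h1.sub h2).congr_deriv (by simp)
  · intro x hx
    rw [interior_Icc] at hx
    apply HasDerivAt.hasDerivWithinAt
    have h1 := (Real.hasDerivAt_rpow_const (x := x) (p := q - 1) (Or.inl hx.1.ne')).const_mul q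
    have h2 := ((hasDerivAt_id x).const_mul 2).const_mul c
    exact (h1.sub h2).congr_deriv (by simp)
  · intro x hx
    rw [interior_Icc] at hx
    have h1 : c₀ ^ (q - 2) ≤ x ^ (q - 2) :=
      Real.rpow_le_rpow_of_nonpos hx.1 hx.2.le (by linarith)
    have h2 : q - 1 - 1 = q - 2 := by ring
    rw [h2, hc]
    have h3 : 0 ≤ q * (q - 1) := by nlinarith
    have := mul_le_mul_of_nonneg_left h1 h3
    nlinarith

variable {ι : Type*} [Fintype ι]

lemma sum_variance {π z : ι → ℝ} (h1 : ∑ s, π s = 1) {Z : ℝ} (hZ : ∑ s, π s * z s = Z) :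
    ∑ s, π s * (z s - Z) ^ 2 = ∑ s, π s * z s ^ 2 - Z ^ 2 := by
  have : ∀ s, π s * (z s - Z) ^ 2 = π s * z s ^ 2 - 2 * Z * (π s * z s) + Z ^ 2 * π s := by
    intro s; ring
  simp_rw [this, Finset.sum_add_distrib, Finset.sum_sub_distrib, ← Finset.mul_sum, h1, hZ]
  ring

/-- Strict Jensen inequality for `t ^ q`, `1 < q ≤ 2`, with a variance gain; the gain survives since
no value exceeds the mean by more than a fixed factor. -/
lemma jensen_gain {π h : ι → ℝ} (hπ : ∀ s, 0 ≤ π s) (h1 : ∑ s, π s = 1) {q c₀ : ℝ}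
    (hq1 : 1 < q) (hq2 : q ≤ 2) (hh : ∀ s, 0 ≤ h s) {H : ℝ}
    (hH : ∑ s, π s * h s = H) (hub : ∀ s, h s ≤ c₀ * H) :
    H ^ q + (q * (q - 1) * c₀ ^ (q - 2) / 2) * (H ^ (q - 2) * ∑ s, π s * (h s - H) ^ 2)
      ≤ ∑ s, π s * h s ^ q := by
  have hH0 : 0 ≤ H := hH ▸ Finset.sum_nonneg fun s _ => mul_nonneg (hπ s) (hh s)
  rcases hH0.eq_or_lt with h0 | hpos
  · have hz : ∀ s, h s = 0 := fun s => le_antisymm (by simpa [← h0] using hub s) (hh s)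
    simp [← h0, hz, Real.zero_rpow (by linarith : q ≠ 0)]
  · set c := q * (q - 1) * c₀ ^ (q - 2) / 2
    have hJ := (convexOn_rpow_sub_sq hq1 hq2).map_sum_le (t := Finset.univ) (w := π)
      (p := fun s => h s / H) (fun s _ => hπ s) h1
      (fun s _ => ⟨div_nonneg (hh s) hH0, by rw [div_le_iff₀ hpos]; exact hub s⟩)
    have hm : ∑ s, π s • (h s / H) = 1 := by
      simp_rw [smul_eq_mul, ← mul_div_assoc, ← Finset.sum_div, hH]
      exact div_self hpos.ne'
    rw [hm] at hJ
    have hv := sum_variance h1 hH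
    have e1 : ∑ s, π s • ((h s / H) ^ q - c * (h s / H) ^ 2)
        = (∑ s, π s * h s ^ q) / H ^ q - c * ((∑ s, π s * h s ^ 2) / H ^ 2) := by
      simp_rw [Real.div_rpow (hh _) hH0, div_pow, smul_eq_mul, mul_sub, Finset.sum_sub_distrib,
        Finset.sum_div, Finset.mul_sum]
      congr 1
      · exact Finset.sum_congr rfl fun s _ => by ring
      · exact Finset.sum_congr rfl fun s _ => by ring
    rw [e1] at hJ
    rw [hv]
    have hHq : 0 < H ^ q := Real.rpow_pos_of_pos hpos _
    have e2 : H ^ (q - 2) = H ^ q / H ^ 2 := by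
      rw [Real.rpow_sub hpos]; norm_num
    have h3 := mul_le_mul_of_nonneg_right hJ hHq.le
    have e3 : ((∑ s, π s * h s ^ q) / H ^ q - c * ((∑ s, π s * h s ^ 2) / H ^ 2)) * H ^ q
        = ∑ s, π s * h s ^ q - c * (H ^ q / H ^ 2 * ∑ s, π s * h s ^ 2) := by
      field_simp
    have e4 : H ^ q / H ^ 2 * (∑ s, π s * h s ^ 2 - H ^ 2)
        = H ^ q / H ^ 2 * ∑ s, π s * h s ^ 2 - H ^ q := by
      field_simp
    rw [e3] at h3
    rw [e2, e4]
    rw [Real.one_rpow, one_pow, mul_one] at h3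
    change (1 - c) * H ^ q ≤ _ at h3
    linarith

/-- One-step inequality for the functional `ζ² η ^ (2 - q)`: along an averaging step it decreases
by at least a weighted variance of `ζ`, up to the weighted variance of `η`, as long as
`ζ ≤ η ^ (q - 1)` at the mean. -/
lemma mixed_gain {π z h : ι → ℝ} (hπ : ∀ s, 0 ≤ π s) (h1 : ∑ s, π s = 1) {q c₀ : ℝ}
    (hq1 : 1 < q) (hq2 : q ≤ 2) (hc₀ : 1 ≤ c₀) (hz : ∀ s, 0 ≤ z s) (hh : ∀ s, 0 ≤ h s) {Z H : ℝ}
    (hZ : ∑ s, π s * z s = Z) (hH : ∑ s, π s * h s = H) (hubz : ∀ s, z s ≤ c₀ * Z)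
    (hubh : ∀ s, h s ≤ c₀ * H) (hZH : Z ≤ H ^ (q - 1)) :
    Z ^ 2 * H ^ (2 - q) + (1 / 2) * (H ^ (2 - q) * ∑ s, π s * (z s - Z) ^ 2)
      ≤ ∑ s, π s * (z s ^ 2 * h s ^ (2 - q))
        + (1 + (2 + c₀) ^ 2 / 2) * (H ^ (q - 2) * ∑ s, π s * (h s - H) ^ 2) := by
  have hH0 : 0 ≤ H := hH ▸ Finset.sum_nonneg fun s _ => mul_nonneg (hπ s) (hh s)
  have hZ0 : 0 ≤ Z := hZ ▸ Finset.sum_nonneg fun s _ => mul_nonneg (hπ s) (hz s)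
  rcases hH0.eq_or_lt with h0 | hpos
  · have hZ1 : Z = 0 := by
      rw [← h0, Real.zero_rpow (by linarith)] at hZH
      linarith
    have hz' : ∀ s, z s = 0 := fun s => le_antisymm (by simpa [hZ1] using hubz s) (hz s)
    have hh' : ∀ s, h s = 0 := fun s => le_antisymm (by simpa [← h0] using hubh s) (hh s)
    simp [← h0, hz', hh', hZ1]
  · set C := 1 + (2 + c₀) ^ 2 / 2 with hC
    set θ := 2 - q with hθ
    have hHθ : 0 < H ^ θ := Real.rpow_pos_of_pos hpos _
    have key : ∀ s, Z ^ 2 + Z ^ 2 * θ * (h s / H - 1) + 2 * Z * (z s - Z) + (1 / 2) * (z s - Z) ^ 2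
        - C * Z ^ 2 * (h s / H - 1) ^ 2 ≤ z s ^ 2 * (h s / H) ^ θ := by
      intro s
      have ht : 0 ≤ h s / H := div_nonneg (hh s) hH0
      have k1 := rpow_ge_quadratic ht (by linarith : 0 ≤ θ) (by linarith : θ ≤ 1)
      have k2 := abs_rpow_sub_one_le ht (by linarith : 0 ≤ θ) (by linarith : θ ≤ 1)
      set T := (h s / H) ^ θ
      set ε := h s / H - 1
      set δ := z s - Z with hδ
      have hzs : z s = Z + δ := by rw [hδ]; ring
      have hδ' : |δ| ≤ c₀ * Z := by
        rw [abs_le]; constructor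
        · have := hz s; nlinarith
        · have := hubz s; linarith
      have m1 : Z ^ 2 * (1 + θ * ε - ε ^ 2) ≤ Z ^ 2 * T := by gcongr
      have m2 : -(2 * Z * (|δ| * |ε|)) ≤ 2 * Z * (δ * (T - 1)) := by
        have : |δ * (T - 1)| ≤ |δ| * |ε| := by rw [abs_mul]; gcongr
        have := neg_le_of_abs_le this
        have := mul_le_mul_of_nonneg_left this (by linarith : 0 ≤ 2 * Z)
        linarith
      have m3 : -(c₀ * Z * (|δ| * |ε|)) ≤ δ ^ 2 * (T - 1) := by
        have a1 : -|ε| ≤ T - 1 := neg_le_of_abs_le k2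
        have a2 : δ ^ 2 * -|ε| ≤ δ ^ 2 * (T - 1) := by gcongr
        have a3 : δ ^ 2 * |ε| ≤ c₀ * Z * (|δ| * |ε|) := by
          rw [← sq_abs]
          have : |δ| * (|δ| * |ε|) ≤ c₀ * Z * (|δ| * |ε|) := by gcongr
          nlinarith
        linarith
      have m4 : (2 + c₀) * Z * (|δ| * |ε|) ≤ (1 / 2) * δ ^ 2 + (2 + c₀) ^ 2 / 2 * Z ^ 2 * ε ^ 2 := by
        rw [← sq_abs δ, ← sq_abs ε]
        nlinarith [sq_nonneg (|δ| - (2 + c₀) * Z * |ε|)]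
      rw [hzs]
      have e : (Z + δ) ^ 2 * T = Z ^ 2 * T + 2 * Z * (δ * (T - 1)) + 2 * Z * δ + δ ^ 2 * (T - 1)
          + δ ^ 2 := by ring
      rw [e]
      have : C * Z ^ 2 * ε ^ 2 = Z ^ 2 * ε ^ 2 + (2 + c₀) ^ 2 / 2 * Z ^ 2 * ε ^ 2 := by rw [hC]; ring
      nlinarith
    have hsum := Finset.sum_le_sum fun s (_ : s ∈ Finset.univ) =>
      mul_le_mul_of_nonneg_left (key s) (hπ s)
    have c1 : ∑ s, π s * (h s / H - 1) = 0 := by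
      have : ∀ s, π s * (h s / H - 1) = (π s * h s) / H - π s := fun s => by ring
      simp_rw [this, Finset.sum_sub_distrib, ← Finset.sum_div, hH, h1, div_self hpos.ne']
      norm_num
    have c2 : ∑ s, π s * (z s - Z) = 0 := by
      simp_rw [mul_sub, Finset.sum_sub_distrib, ← Finset.sum_mul, hZ, h1]; ring
    have c3 : ∑ s, π s * (h s / H - 1) ^ 2 = (∑ s, π s * (h s - H) ^ 2) / H ^ 2 := by
      rw [Finset.sum_div]
      exact Finset.sum_congr rfl fun s _ => by field_simp
    have c4 : ∑ s, π s * (Z ^ 2 + Z ^ 2 * θ * (h s / H - 1) + 2 * Z * (z s - Z)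
        + (1 / 2) * (z s - Z) ^ 2 - C * Z ^ 2 * (h s / H - 1) ^ 2)
        = Z ^ 2 + (1 / 2) * ∑ s, π s * (z s - Z) ^ 2
          - C * Z ^ 2 * ((∑ s, π s * (h s - H) ^ 2) / H ^ 2) := by
      have : ∀ s, π s * (Z ^ 2 + Z ^ 2 * θ * (h s / H - 1) + 2 * Z * (z s - Z)
        + (1 / 2) * (z s - Z) ^ 2 - C * Z ^ 2 * (h s / H - 1) ^ 2)
        = Z ^ 2 * π s + Z ^ 2 * θ * (π s * (h s / H - 1)) + 2 * Z * (π s * (z s - Z))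
          + (1 / 2) * (π s * (z s - Z) ^ 2) - C * Z ^ 2 * (π s * (h s / H - 1) ^ 2) := by
        intro s; ring
      simp_rw [this, Finset.sum_sub_distrib, Finset.sum_add_distrib, ← Finset.mul_sum, c1, c2, c3, h1]
      ring
    rw [c4] at hsum
    have h3 := mul_le_mul_of_nonneg_left hsum hHθ.le
    have c5 : H ^ θ * ∑ s, π s * (z s ^ 2 * (h s / H) ^ θ) = ∑ s, π s * (z s ^ 2 * h s ^ θ) := by
      rw [Finset.mul_sum]
      refine Finset.sum_congr rfl fun s _ => ?_
      rw [Real.div_rpow (hh s) hH0]; field_simp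
    rw [c5] at h3
    set V := ∑ s, π s * (h s - H) ^ 2 with hV
    have hV0 : 0 ≤ V := Finset.sum_nonneg fun s _ => mul_nonneg (hπ s) (sq_nonneg _)
    have c6 : H ^ θ * (Z ^ 2 * (V / H ^ 2)) ≤ H ^ (q - 2) * V := by
      have : Z ^ 2 ≤ H ^ (2 * (q - 1)) := by
        calc Z ^ 2 ≤ (H ^ (q - 1)) ^ 2 := by gcongr
          _ = _ := by rw [← Real.rpow_natCast, ← Real.rpow_mul hH0]; congr 1; push_cast; ring
      calc H ^ θ * (Z ^ 2 * (V / H ^ 2)) ≤ H ^ θ * (H ^ (2 * (q - 1)) * (V / H ^ 2)) := by gcongr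
        _ = (H ^ θ * H ^ (2 * (q - 1)) / H ^ (2:ℝ)) * V := by
            rw [Real.rpow_two]; ring
        _ = _ := by
            rw [← Real.rpow_add hpos, ← Real.rpow_sub hpos]; congr 2; rw [hθ]; ring
    have hC0 : 0 ≤ C := by rw [hC]; positivity
    have := mul_le_mul_of_nonneg_left c6 hC0
    nlinarith

end

/-! ### The lazy walk and its square functions -/

section

/-- Index set of the steps of the lazy nearest-neighbour walk: `none` is resting, `some (i, true)`
and `some (i, false)` are the steps `+eᵢ` and `-eᵢ`. -/
abbrev Step (d : ℕ) := Option (Fin d × Bool)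

/-- The displacement of a step. -/
def stp {d : ℕ} : Step d → Lat d
  | none => 0
  | some (i, true) => unitv d i
  | some (i, false) => -unitv d i

/-- The probability of a step: rest with probability `3/4`, otherwise move to a uniformly chosen
neighbour. -/
def wt {d : ℕ} : Step d → ℝ
  | none => 3 / 4
  | some _ => 1 / (8 * d)

/-- The Markov operator of the lazy walk, `avg = 1 - ∇*∇ / (8d)`. -/
def avg {d : ℕ} (f : Lat d → ℝ) (x : Lat d) : ℝ := ∑ s : Step d, wt s * f (x + stp s)

/-- The variance of `f` under one step of the lazy walk started at `x`. -/
def stepVar {d : ℕ} (f : Lat d → ℝ) (x : Lat d) : ℝ :=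
  ∑ s : Step d, wt s * (f (x + stp s) - avg f x) ^ 2

/-- The backward difference, adjoint to the forward difference in direction `eᵢ`. -/
def bdiff {d : ℕ} (i : Fin d) (f : Lat d → ℝ) (x : Lat d) : ℝ := f (x - unitv d i) - f x

/-- Finite support of a lattice function. -/
def FS {d : ℕ} (f : Lat d → ℝ) : Prop := (Function.support f).Finite

variable {d : ℕ}

lemma sum_step (F : Step d → ℝ) :
    ∑ s, F s = F none + ∑ i, (F (some (i, true)) + F (some (i, false))) := by
  rw [Fintype.sum_option, Fintype.sum_prod_type]
  simp

lemma wt_nonneg (s : Step d) : 0 ≤ wt s := by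
  rcases s with _ | s <;> (simp only [wt]; positivity)

lemma wt_sum [NeZero d] : ∑ s : Step d, wt s = 1 := by
  have : (d : ℝ) ≠ 0 := Nat.cast_ne_zero.2 (NeZero.ne d)
  rw [sum_step]
  simp [wt]
  field_simp
  norm_num

lemma one_le_cast_d [NeZero d] : (1 : ℝ) ≤ d := by
  exact_mod_cast Nat.one_le_iff_ne_zero.2 (NeZero.ne d)

lemma wt_ge [NeZero d] (s : Step d) : 1 / (8 * (d : ℝ)) ≤ wt s := by
  have := one_le_cast_d (d := d)
  rcases s with _ | s
  · simp only [wt]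
    rw [div_le_div_iff₀ (by positivity) (by norm_num)]
    linarith
  · simp [wt]

lemma sum_step_neg (F : Lat d → ℝ) :
    ∑ s : Step d, wt s * F (-stp s) = ∑ s : Step d, wt s * F (stp s) := by
  rw [sum_step, sum_step]
  simp only [stp, wt, neg_zero, neg_neg]
  congr 1
  exact Finset.sum_congr rfl fun i _ => by ring

lemma FS.of_imp {f g : Lat d → ℝ} (hf : FS f) (h : ∀ x, f x = 0 → g x = 0) : FS g :=
  hf.subset fun x hx hfx => hx (h x hfx)

lemma FS.shift {f : Lat d → ℝ} (hf : FS f) (v : Lat d) : FS (fun x => f (x + v)) :=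
  Set.Finite.preimage (add_left_injective v).injOn hf

lemma FS.add {f g : Lat d → ℝ} (hf : FS f) (hg : FS g) : FS (fun x => f x + g x) :=
  (hf.union hg).subset (Function.support_add f g)

lemma FS.sum {ι : Type*} (t : Finset ι) {f : ι → Lat d → ℝ} (hf : ∀ i, FS (f i)) :
    FS (fun x => ∑ i ∈ t, f i x) := by
  classical
  induction t using Finset.induction_on with
  | empty => simp [FS]
  | insert a s ha ih => simp only [Finset.sum_insert ha]; exact (hf a).add ih

lemma FS.summable {f : Lat d → ℝ} (hf : FS f) : Summable f := summable_of_hasFiniteSupport hf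

lemma FS.avg {f : Lat d → ℝ} (hf : FS f) : FS (avg f) :=
  FS.sum _ fun s => (hf.shift (stp s)).of_imp fun x hx => by simp [hx]

lemma FS.iter {f : Lat d → ℝ} (hf : FS f) (k : ℕ) : FS (StochHom.avg^[k] f) := by
  induction k with
  | zero => exact hf
  | succ k ih => rw [Function.iterate_succ_apply']; exact ih.avg

lemma FS.bdiff {f : Lat d → ℝ} (hf : FS f) (i : Fin d) : FS (bdiff i f) := by
  have h1 := hf.shift (-unitv d i)
  have h2 : FS (fun x => -f x) := hf.of_imp fun x hx => by simp [hx]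
  have := h1.add h2
  exact this.of_imp fun x hx => by simpa [StochHom.bdiff, sub_eq_add_neg] using hx

lemma tsum_shift (f : Lat d → ℝ) (v : Lat d) : ∑' x, f (x + v) = ∑' x, f x :=
  (Equiv.addRight v).tsum_eq f

lemma tsum_avg [NeZero d] {f : Lat d → ℝ} (hf : FS f) : ∑' x, avg f x = ∑' x, f x := by
  unfold avg
  rw [Summable.tsum_finsetSum fun s _ => ((hf.shift (stp s)).summable.mul_left _)]
  simp_rw [tsum_mul_left, tsum_shift, ← Finset.sum_mul, wt_sum, one_mul]

lemma avg_nonneg {f : Lat d → ℝ} (hf : ∀ x, 0 ≤ f x) (x : Lat d) : 0 ≤ avg f x :=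
  Finset.sum_nonneg fun s _ => mul_nonneg (wt_nonneg s) (hf _)

lemma avg_mono {f g : Lat d → ℝ} (h : ∀ x, f x ≤ g x) (x : Lat d) : avg f x ≤ avg g x :=
  Finset.sum_le_sum fun s _ => mul_le_mul_of_nonneg_left (h _) (wt_nonneg s)

lemma iter_nonneg {f : Lat d → ℝ} (hf : ∀ x, 0 ≤ f x) (k : ℕ) (x : Lat d) : 0 ≤ avg^[k] f x := by
  induction k generalizing x with
  | zero => exact hf x
  | succ k ih => rw [Function.iterate_succ_apply']; exact avg_nonneg ih x

lemma iter_mono {f g : Lat d → ℝ} (h : ∀ x, f x ≤ g x) (k : ℕ) (x : Lat d) :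
    avg^[k] f x ≤ avg^[k] g x := by
  induction k generalizing x with
  | zero => exact h x
  | succ k ih => rw [Function.iterate_succ_apply', Function.iterate_succ_apply']; exact avg_mono ih x

/-- A nonnegative function exceeds its average at a neighbour by at most the factor `8d`. -/
lemma le_avg [NeZero d] {f : Lat d → ℝ} (hf : ∀ x, 0 ≤ f x) (x : Lat d) (s : Step d) :
    f (x + stp s) ≤ 8 * d * avg f x := by
  have h1 : wt s * f (x + stp s) ≤ avg f x :=
    Finset.single_le_sum (f := fun s => wt s * f (x + stp s))
      (fun s _ => mul_nonneg (wt_nonneg s) (hf _)) (Finset.mem_univ s)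
  have h2 : 1 / (8 * (d : ℝ)) * f (x + stp s) ≤ avg f x :=
    (mul_le_mul_of_nonneg_right (wt_ge s) (hf _)).trans h1
  have hd := one_le_cast_d (d := d)
  rw [div_mul_eq_mul_div, one_mul, div_le_iff₀ (by positivity)] at h2
  linarith

lemma stepVar_nonneg (f : Lat d → ℝ) (x : Lat d) : 0 ≤ stepVar f x :=
  Finset.sum_nonneg fun s _ => mul_nonneg (wt_nonneg s) (sq_nonneg _)

lemma stepVar_eq [NeZero d] (f : Lat d → ℝ) (x : Lat d) :
    stepVar f x = avg (fun y => f y ^ 2) x - avg f x ^ 2 :=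
  sum_variance wt_sum rfl

lemma FS.stepVar [NeZero d] {f : Lat d → ℝ} (hf : FS f) : FS (stepVar f) := by
  have h1 : FS (StochHom.avg fun y => f y ^ 2) := (hf.of_imp fun x hx => by simp [hx]).avg
  have h2 : FS fun x => -StochHom.avg f x ^ 2 := hf.avg.of_imp fun x hx => by simp [hx]
  have := h1.add h2
  refine this.of_imp fun x hx => ?_
  rw [stepVar_eq]; linarith

lemma stepVar_eq_zero [NeZero d] {f : Lat d → ℝ} (hf : ∀ x, 0 ≤ f x) {x : Lat d} (h : avg f x = 0) :
    stepVar f x = 0 := by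
  have h0 : ∀ s, f (x + stp s) = 0 := fun s =>
    le_antisymm (by simpa [h] using le_avg hf x s) (hf _)
  simp [stepVar, h, h0]

lemma sq_sub_le_stepVar [NeZero d] (f : Lat d → ℝ) (x : Lat d) (s : Step d) :
    (f (x + stp s) - avg f x) ^ 2 ≤ 8 * d * stepVar f x := by
  have h1 : wt s * (f (x + stp s) - avg f x) ^ 2 ≤ stepVar f x :=
    Finset.single_le_sum (f := fun s => wt s * (f (x + stp s) - avg f x) ^ 2)
      (fun s _ => mul_nonneg (wt_nonneg s) (sq_nonneg _)) (Finset.mem_univ s)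
  have h2 : 1 / (8 * (d : ℝ)) * (f (x + stp s) - avg f x) ^ 2 ≤ stepVar f x :=
    (mul_le_mul_of_nonneg_right (wt_ge s) (sq_nonneg _)).trans h1
  have hd := one_le_cast_d (d := d)
  rw [div_mul_eq_mul_div, one_mul, div_le_iff₀ (by positivity)] at h2
  linarith

lemma bdiff_sq_le [NeZero d] (f : Lat d → ℝ) (i : Fin d) (x : Lat d) :
    bdiff i f x ^ 2 ≤ 32 * d * stepVar f x := by
  have h1 := sq_sub_le_stepVar f x none
  have h2 := sq_sub_le_stepVar f x (some (i, false))
  simp only [stp, add_zero, ← sub_eq_add_neg] at h1 h2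
  unfold bdiff
  nlinarith [sq_nonneg ((f (x - unitv d i) - avg f x) + (f x - avg f x))]

variable [NeZero d]

/-- Space-time square function bound with weight `G_{k+1} ^ (q - 2)`, by telescoping `∑ G_k ^ q`. -/
lemma square_bound {q : ℝ} (hq1 : 1 < q) (hq2 : q ≤ 2) {G : Lat d → ℝ} (hG : ∀ x, 0 ≤ G x)
    (hGs : FS G) (M : ℕ) :
    (q * (q - 1) * (8 * d) ^ (q - 2) / 2) * ∑ k ∈ Finset.range M,
        ∑' x, (avg^[k + 1] G x) ^ (q - 2) * stepVar (avg^[k] G) x ≤ ∑' x, G x ^ q := by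
  set c := q * (q - 1) * (8 * (d : ℝ)) ^ (q - 2) / 2
  have hq0 : q ≠ 0 := by linarith
  have fsq : ∀ k, FS fun x => (avg^[k] G x) ^ q := fun k =>
    (hGs.iter k).of_imp fun x hx => by simp [hx, hq0]
  have fsV : ∀ k, FS fun x => (avg^[k + 1] G x) ^ (q - 2) * stepVar (avg^[k] G) x := fun k =>
    (hGs.iter k).stepVar.of_imp fun x hx => by simp [hx]
  have step : ∀ k, ∑' x, (avg^[k + 1] G x) ^ q
      + c * ∑' x, (avg^[k + 1] G x) ^ (q - 2) * stepVar (avg^[k] G) x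
      ≤ ∑' x, (avg^[k] G x) ^ q := by
    intro k
    rw [← tsum_mul_left, ← (fsq (k + 1)).summable.tsum_add ((fsV k).summable.mul_left c),
      ← tsum_avg (fsq k)]
    refine Summable.tsum_le_tsum (fun x => ?_) ((fsq (k+1)).summable.add
      ((fsV k).summable.mul_left c)) (fsq k).avg.summable
    rw [Function.iterate_succ_apply']
    exact jensen_gain wt_nonneg wt_sum hq1 hq2 (fun s => iter_nonneg hG k _) rfl
      (fun s => le_avg (iter_nonneg hG k) x s)
  have tel : ∀ M, ∑' x, (avg^[M] G x) ^ q + c * ∑ k ∈ Finset.range M,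
        ∑' x, (avg^[k + 1] G x) ^ (q - 2) * stepVar (avg^[k] G) x ≤ ∑' x, G x ^ q := by
    intro M
    induction M with
    | zero => simp
    | succ M ih => rw [Finset.sum_range_succ]; have := step M; linarith
  have h0 : 0 ≤ ∑' x, (avg^[M] G x) ^ q := tsum_nonneg fun x => Real.rpow_nonneg (iter_nonneg hG M x) _
  linarith [tel M]

/-- The companion bound with the reciprocal weight for `f`, by telescoping
`∑ f_k² G_k ^ (2 - q)`, when `f_k ≤ G_k ^ (q - 1)` at all times. -/
lemma mixed_bound {q : ℝ} (hq1 : 1 < q) (hq2 : q ≤ 2) {f G : Lat d → ℝ} (hf : ∀ x, 0 ≤ f x)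
    (hG : ∀ x, 0 ≤ G x) (hfs : FS f) (hGs : FS G)
    (hfG : ∀ k x, avg^[k] f x ≤ (avg^[k] G x) ^ (q - 1)) (M : ℕ) :
    (1 / 2) * ∑ k ∈ Finset.range M, ∑' x, (avg^[k + 1] G x) ^ (2 - q) * stepVar (avg^[k] f) x
      ≤ ∑' x, G x ^ q + (1 + (2 + 8 * (d : ℝ)) ^ 2 / 2) * ∑ k ∈ Finset.range M,
        ∑' x, (avg^[k + 1] G x) ^ (q - 2) * stepVar (avg^[k] G) x := by
  set C := 1 + (2 + 8 * (d : ℝ)) ^ 2 / 2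
  have hq0 : q ≠ 0 := by linarith
  have fsq : ∀ k, FS fun x => (avg^[k] f x) ^ 2 * (avg^[k] G x) ^ (2 - q) := fun k =>
    (hfs.iter k).of_imp fun x hx => by simp [hx]
  have fsV : ∀ k, FS fun x => (avg^[k + 1] G x) ^ (q - 2) * stepVar (avg^[k] G) x := fun k =>
    (hGs.iter k).stepVar.of_imp fun x hx => by simp [hx]
  have fsW : ∀ k, FS fun x => (avg^[k + 1] G x) ^ (2 - q) * stepVar (avg^[k] f) x := fun k =>
    (hfs.iter k).stepVar.of_imp fun x hx => by simp [hx]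
  have step : ∀ k, ∑' x, (avg^[k + 1] f x) ^ 2 * (avg^[k + 1] G x) ^ (2 - q)
      + (1 / 2) * ∑' x, (avg^[k + 1] G x) ^ (2 - q) * stepVar (avg^[k] f) x
      ≤ ∑' x, (avg^[k] f x) ^ 2 * (avg^[k] G x) ^ (2 - q)
        + C * ∑' x, (avg^[k + 1] G x) ^ (q - 2) * stepVar (avg^[k] G) x := by
    intro k
    rw [← tsum_mul_left, ← (fsq (k + 1)).summable.tsum_add ((fsW k).summable.mul_left _),
      ← tsum_avg (fsq k), ← tsum_mul_left,
      ← (fsq k).avg.summable.tsum_add ((fsV k).summable.mul_left _)]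
    refine Summable.tsum_le_tsum (fun x => ?_) ((fsq (k+1)).summable.add
      ((fsW k).summable.mul_left _)) ((fsq k).avg.summable.add ((fsV k).summable.mul_left _))
    have hk := hfG (k + 1) x
    rw [Function.iterate_succ_apply', Function.iterate_succ_apply'] at hk ⊢
    have hd := one_le_cast_d (d := d)
    exact mixed_gain wt_nonneg wt_sum hq1 hq2 (by linarith) (fun s => iter_nonneg hf k _)
      (fun s => iter_nonneg hG k _) rfl rfl
      (fun s => le_avg (iter_nonneg hf k) x s) (fun s => le_avg (iter_nonneg hG k) x s) hk
  have tel : ∀ M, ∑' x, (avg^[M] f x) ^ 2 * (avg^[M] G x) ^ (2 - q)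
      + (1 / 2) * ∑ k ∈ Finset.range M, ∑' x, (avg^[k + 1] G x) ^ (2 - q) * stepVar (avg^[k] f) x
      ≤ ∑' x, (f x) ^ 2 * (G x) ^ (2 - q) + C * ∑ k ∈ Finset.range M,
        ∑' x, (avg^[k + 1] G x) ^ (q - 2) * stepVar (avg^[k] G) x := by
    intro M
    induction M with
    | zero => simp
    | succ M ih => rw [Finset.sum_range_succ, Finset.sum_range_succ]; have := step M; linarith
  have h0 : 0 ≤ ∑' x, (avg^[M] f x) ^ 2 * (avg^[M] G x) ^ (2 - q) :=
    tsum_nonneg fun x => mul_nonneg (sq_nonneg _) (Real.rpow_nonneg (iter_nonneg hG M x) _)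
  have h1 : ∑' x, (f x) ^ 2 * (G x) ^ (2 - q) ≤ ∑' x, G x ^ q := by
    refine Summable.tsum_le_tsum (fun x => ?_) (fsq 0).summable
      (hGs.of_imp fun x hx => by simp [hx, hq0]).summable
    have h : f x ≤ G x ^ (q - 1) := hfG 0 x
    rcases (hG x).eq_or_lt with h0 | hpos
    · rw [← h0, Real.zero_rpow (by linarith)] at h
      have : f x = 0 := le_antisymm h (hf x)
      simp [this, ← h0, hq0]
    · calc f x ^ 2 * G x ^ (2 - q) ≤ (G x ^ (q - 1)) ^ 2 * G x ^ (2 - q) := by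
            have := hf x
            gcongr
        _ = G x ^ q := by
            rw [← Real.rpow_natCast, ← Real.rpow_mul hpos.le, ← Real.rpow_add hpos]
            congr 1; push_cast; ring
  linarith [tel M]

end

/-! ### The bilinear embedding -/

section

variable {d : ℕ}

lemma add_rpow_le_two {a b q : ℝ} (ha : 0 ≤ a) (hb : 0 ≤ b) (hq : 0 ≤ q) :
    (a + b) ^ q ≤ 2 ^ q * (a ^ q + b ^ q) := by
  have hm : 0 ≤ max a b := le_max_of_le_left ha
  calc (a + b) ^ q ≤ (2 * max a b) ^ q := by
        apply Real.rpow_le_rpow (by positivity) _ hq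
        linarith [le_max_left a b, le_max_right a b]
    _ = 2 ^ q * (max a b) ^ q := Real.mul_rpow (by norm_num) hm
    _ ≤ 2 ^ q * (a ^ q + b ^ q) := by
        gcongr
        have h1 := Real.rpow_nonneg ha q
        have h2 := Real.rpow_nonneg hb q
        rcases max_cases a b with ⟨h, _⟩ | ⟨h, _⟩ <;> rw [h] <;> linarith

lemma avg_sub (f g : Lat d → ℝ) : avg (fun x => f x - g x) = fun x => avg f x - avg g x := by
  funext x
  simp only [avg, mul_sub, Finset.sum_sub_distrib]

lemma iter_sub (f g : Lat d → ℝ) (k : ℕ) :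
    avg^[k] (fun x => f x - g x) = fun x => avg^[k] f x - avg^[k] g x := by
  induction k with
  | zero => rfl
  | succ k ih =>
    rw [Function.iterate_succ_apply', ih, avg_sub]
    simp only [Function.iterate_succ_apply']

lemma bdiff_sub (i : Fin d) (f g : Lat d → ℝ) (x : Lat d) :
    bdiff i (fun x => f x - g x) x = bdiff i f x - bdiff i g x := by
  simp only [bdiff]; ring

variable [NeZero d]

/-- The bilinear embedding for nonnegative functions and `2 ≤ p`. -/
lemma bilinear_pos {p q : ℝ} (hpq : p.HolderConjugate q) (hp : 2 ≤ p) :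
    ∃ C : ℝ, 0 < C ∧ ∀ f g : Lat d → ℝ, (∀ x, 0 ≤ f x) → (∀ x, 0 ≤ g x) → FS f → FS g →
      ∀ (M : ℕ) (i j : Fin d),
      ∑ k ∈ Finset.range M, ∑' x, |bdiff i (avg^[k] f) x| * |bdiff j (avg^[k] g) x|
        ≤ C * (∑' x, f x ^ p + ∑' x, g x ^ q) := by
  have hd := one_le_cast_d (d := d)
  have hq1 : 1 < q := hpq.symm.lt
  have hsum := hpq.inv_add_inv_eq_one
  have hpq' : (p - 1) * q = p := by
    have := hpq.symm.sub_one_mul_conj; have := hpq.sub_one_mul_conj; linarith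
  have hqp : (p - 1) * (q - 1) = 1 := by
    have := hpq.symm.sub_one_mul_conj; nlinarith
  have hq2 : q ≤ 2 := by nlinarith
  have hq0 : q ≠ 0 := by linarith
  have hp0 : p ≠ 0 := by linarith
  set c := q * (q - 1) * (8 * (d : ℝ)) ^ (q - 2) / 2 with hc
  have hc0 : 0 < c := by
    have h1 : 0 < (8 * (d : ℝ)) ^ (q - 2) := Real.rpow_pos_of_pos (by linarith) _
    have : 0 < q - 1 := by linarith
    positivity
  set C₁ := 1 + (2 + 8 * (d : ℝ)) ^ 2 / 2 with hC1
  have hC1' : 0 < C₁ := by positivity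
  refine ⟨16 * d * (2 * (1 + C₁ / c) + 1 / c) * 2 ^ q, by positivity, ?_⟩
  intro f g hf hg hfs hgs M i j
  -- this `G` dominates both `g` and `f ^ (p - 1)`, and `G ^ q` is controlled by `g ^ q + f ^ p`
  set G : Lat d → ℝ := fun x => g x + f x ^ (p - 1) with hGdef
  have hG : ∀ x, 0 ≤ G x := fun x => add_nonneg (hg x) (Real.rpow_nonneg (hf x) _)
  have hGs : FS G := hgs.add (hfs.of_imp fun x hx => by
    simp [hx, Real.zero_rpow (by linarith : p - 1 ≠ 0)])
  have hgG : ∀ k x, avg^[k] g x ≤ avg^[k] G x := fun k =>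
    iter_mono (fun x => by have := Real.rpow_nonneg (hf x) (p - 1); simp only [hGdef]; linarith) k
  -- Jensen's inequality propagates `f ^ (p - 1) ≤ G` along the walk
  have hfG' : ∀ k x, (avg^[k] f x) ^ (p - 1) ≤ avg^[k] G x := by
    intro k
    induction k with
    | zero => intro x; have := hg x; simp only [hGdef, Function.iterate_zero, id]; linarith
    | succ k ih =>
      intro x
      rw [Function.iterate_succ_apply', Function.iterate_succ_apply']
      refine le_trans ?_ (avg_mono ih x)
      exact Real.rpow_arith_mean_le_arith_mean_rpow _ _ _ (fun s _ => wt_nonneg s) wt_sum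
        (fun s _ => iter_nonneg hf k _) (by linarith)
  have hfG : ∀ k x, avg^[k] f x ≤ (avg^[k] G x) ^ (q - 1) := by
    intro k x
    have h := Real.rpow_le_rpow (Real.rpow_nonneg (iter_nonneg hf k x) _) (hfG' k x)
      (by linarith : 0 ≤ q - 1)
    rwa [← Real.rpow_mul (iter_nonneg hf k x), hqp, Real.rpow_one] at h
  have b1 := square_bound hq1 hq2 hG hGs M
  have b2 := square_bound hq1 hq2 hg hgs M
  have b3 := mixed_bound hq1 hq2 hf hG hfs hGs hfG M
  rw [← hc] at b1 b2
  rw [← hC1] at b3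
  set S₁ := ∑ k ∈ Finset.range M, ∑' x, (avg^[k + 1] G x) ^ (q - 2) * stepVar (avg^[k] G) x
  set S₂ := ∑ k ∈ Finset.range M, ∑' x, (avg^[k + 1] g x) ^ (q - 2) * stepVar (avg^[k] g) x with hS2
  set S₃ := ∑ k ∈ Finset.range M, ∑' x, (avg^[k + 1] G x) ^ (2 - q) * stepVar (avg^[k] f) x with hS3
  have fG : FS fun x => G x ^ q := hGs.of_imp fun x hx => by rw [hx, Real.zero_rpow hq0]
  have fg : FS fun x => g x ^ q := hgs.of_imp fun x hx => by rw [hx, Real.zero_rpow hq0]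
  have ff : FS fun x => f x ^ p := hfs.of_imp fun x hx => by rw [hx, Real.zero_rpow hp0]
  have b4 : ∑' x, g x ^ q ≤ ∑' x, G x ^ q :=
    Summable.tsum_le_tsum (fun x => Real.rpow_le_rpow (hg x) (hgG 0 x) (by linarith))
      fg.summable fG.summable
  have b5 : ∑' x, G x ^ q ≤ 2 ^ q * (∑' x, f x ^ p + ∑' x, g x ^ q) := by
    rw [← ff.summable.tsum_add fg.summable, ← tsum_mul_left]
    refine Summable.tsum_le_tsum (fun x => ?_) fG.summable ((ff.add fg).summable.mul_left _)
    have := add_rpow_le_two (hg x) (Real.rpow_nonneg (hf x) (p - 1)) (by linarith : 0 ≤ q)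
    rw [← Real.rpow_mul (hf x), hpq'] at this
    rw [add_comm (f x ^ p)]
    exact this
  have b6 : ∑ k ∈ Finset.range M, ∑' x, |bdiff i (avg^[k] f) x| * |bdiff j (avg^[k] g) x|
      ≤ 16 * d * (S₃ + S₂) := by
    rw [hS3, hS2, ← Finset.sum_add_distrib, Finset.mul_sum]
    refine Finset.sum_le_sum fun k _ => ?_
    have f2 : FS fun x => (avg^[k + 1] g x) ^ (q - 2) * stepVar (avg^[k] g) x :=
      (hgs.iter k).stepVar.of_imp fun x hx => by simp [hx]
    have f3 : FS fun x => (avg^[k + 1] G x) ^ (2 - q) * stepVar (avg^[k] f) x :=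
      (hfs.iter k).stepVar.of_imp fun x hx => by simp [hx]
    have f1 : FS fun x => |bdiff i (avg^[k] f) x| * |bdiff j (avg^[k] g) x| :=
      ((hfs.iter k).bdiff i).of_imp fun x hx => by simp [hx]
    rw [← f3.summable.tsum_add f2.summable, ← tsum_mul_left]
    refine Summable.tsum_le_tsum (fun x => ?_) f1.summable ((f3.add f2).summable.mul_left _)
    have hA := bdiff_sq_le (avg^[k] f) i x
    have hB := bdiff_sq_le (avg^[k] g) j x
    have hVf := stepVar_nonneg (avg^[k] f) x
    have hVg := stepVar_nonneg (avg^[k] g) x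
    have hH0 := iter_nonneg hG (k + 1) x
    have hg0 := iter_nonneg hg (k + 1) x
    rcases hg0.eq_or_lt with h0 | hpos
    · have hz : stepVar (avg^[k] g) x = 0 :=
        stepVar_eq_zero (iter_nonneg hg k) (by rw [Function.iterate_succ_apply'] at h0; exact h0.symm)
      rw [hz] at hB
      have : bdiff j (avg^[k] g) x = 0 := by
        have : bdiff j (avg^[k] g) x ^ 2 ≤ 0 := by linarith
        exact pow_eq_zero_iff two_ne_zero |>.1 (le_antisymm this (sq_nonneg _))
      rw [this, hz]
      simp only [abs_zero, mul_zero, add_zero]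
      positivity
    · have hHpos : 0 < avg^[k + 1] G x := hpos.trans_le (hgG _ _)
      have hle : (avg^[k + 1] G x) ^ (q - 2) ≤ (avg^[k + 1] g x) ^ (q - 2) :=
        Real.rpow_le_rpow_of_nonpos hpos (hgG _ _) (by linarith)
      have hprod : (avg^[k + 1] G x) ^ (2 - q) * (avg^[k + 1] G x) ^ (q - 2) = 1 := by
        rw [← Real.rpow_add hHpos]; simp
      have ht1 : 0 < (avg^[k + 1] G x) ^ (2 - q) := Real.rpow_pos_of_pos hHpos _
      have ht2 : 0 < (avg^[k + 1] G x) ^ (q - 2) := Real.rpow_pos_of_pos hHpos _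
      set τ := (avg^[k + 1] G x) ^ (2 - q)
      set σ := (avg^[k + 1] G x) ^ (q - 2)
      set a := |bdiff i (avg^[k] f) x| with ha
      set b := |bdiff j (avg^[k] g) x| with hb
      have hab : a * b ≤ (1 / 2) * (τ * a ^ 2 + σ * b ^ 2) := by
        have h1 : 0 ≤ σ * (τ * a - b) ^ 2 := by positivity
        have h2 : σ * (τ * a - b) ^ 2 = τ * (τ * σ) * a ^ 2 - 2 * (τ * σ) * (a * b) + σ * b ^ 2 := by
          ring
        rw [h2, hprod] at h1
        linarith
      rw [ha, hb, sq_abs, sq_abs] at hab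
      have h3 : τ * bdiff i (avg^[k] f) x ^ 2 ≤ τ * (32 * d * stepVar (avg^[k] f) x) := by gcongr
      have h4 : σ * bdiff j (avg^[k] g) x ^ 2
          ≤ (avg^[k + 1] g x) ^ (q - 2) * (32 * d * stepVar (avg^[k] g) x) := by gcongr
      rw [ha, hb]
      linarith
  have b1' : S₁ ≤ (1 / c) * ∑' x, G x ^ q := by
    rw [div_mul_eq_mul_div, one_mul, le_div_iff₀ hc0]; linarith
  have b2' : S₂ ≤ (1 / c) * ∑' x, G x ^ q := by
    rw [div_mul_eq_mul_div, one_mul, le_div_iff₀ hc0]; linarith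
  have b3' : S₃ ≤ 2 * (1 + C₁ / c) * ∑' x, G x ^ q := by
    have := mul_le_mul_of_nonneg_left b1' hC1'.le
    have e : C₁ * (1 / c * ∑' x, G x ^ q) = C₁ / c * ∑' x, G x ^ q := by ring
    rw [e] at this
    linarith
  calc _ ≤ 16 * d * (S₃ + S₂) := b6
    _ ≤ 16 * d * ((2 * (1 + C₁ / c) + 1 / c) * ∑' x, G x ^ q) := by
        gcongr; linarith
    _ ≤ 16 * d * ((2 * (1 + C₁ / c) + 1 / c) * (2 ^ q * (∑' x, f x ^ p + ∑' x, g x ^ q))) := by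
        gcongr
    _ = _ := by ring

/-- The bilinear embedding: the space-time pairing of the differences of `f` and `g` along the walk
is controlled by `∑ |f| ^ p + ∑ |g| ^ q`, uniformly in the number of steps. -/
lemma bilinear_ge_two {p q : ℝ} (hpq : p.HolderConjugate q) (hp : 2 ≤ p) :
    ∃ C : ℝ, 0 < C ∧ ∀ f g : Lat d → ℝ, FS f → FS g → ∀ (M : ℕ) (i j : Fin d),
      ∑ k ∈ Finset.range M, ∑' x, |bdiff i (avg^[k] f) x| * |bdiff j (avg^[k] g) x|
        ≤ C * (∑' x, |f x| ^ p + ∑' x, |g x| ^ q) := by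
  obtain ⟨C, hC, hB⟩ := bilinear_pos (d := d) hpq hp
  have hq1 : 1 < q := hpq.symm.lt
  refine ⟨2 * C, by positivity, ?_⟩
  intro f g hfs hgs M i j
  have pos_neg : ∀ (r : ℝ), 1 < r → ∀ h : Lat d → ℝ, FS h →
      FS (fun x => max (h x) 0) ∧ FS (fun x => max (-h x) 0) ∧
      (∑' x, (max (h x) 0) ^ r + ∑' x, (max (-h x) 0) ^ r = ∑' x, |h x| ^ r) := by
    intro r hr h hh
    have hr0 : r ≠ 0 := by linarith
    have f1 : FS (fun x => max (h x) 0) := hh.of_imp fun x hx => by simp [hx]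
    have f2 : FS (fun x => max (-h x) 0) := hh.of_imp fun x hx => by simp [hx]
    refine ⟨f1, f2, ?_⟩
    have g1 : FS (fun x => (max (h x) 0) ^ r) := f1.of_imp fun x hx => by
      rw [hx, Real.zero_rpow hr0]
    have g2 : FS (fun x => (max (-h x) 0) ^ r) := f2.of_imp fun x hx => by
      rw [hx, Real.zero_rpow hr0]
    rw [← g1.summable.tsum_add g2.summable]
    refine tsum_congr fun x => ?_
    rcases le_total 0 (h x) with h0 | h0
    · rw [max_eq_left h0, max_eq_right (by linarith), abs_of_nonneg h0, Real.zero_rpow hr0, add_zero]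
    · rw [max_eq_right h0, max_eq_left (by linarith), abs_of_nonpos h0, Real.zero_rpow hr0, zero_add]
  obtain ⟨fs1, fs2, fe⟩ := pos_neg p (by linarith) f hfs
  obtain ⟨gs1, gs2, ge⟩ := pos_neg q hq1 g hgs
  set f₁ : Lat d → ℝ := fun x => max (f x) 0
  set f₂ : Lat d → ℝ := fun x => max (-f x) 0
  set g₁ : Lat d → ℝ := fun x => max (g x) 0
  set g₂ : Lat d → ℝ := fun x => max (-g x) 0
  have hf : f = fun x => f₁ x - f₂ x := by
    funext x
    simp only [f₁, f₂]
    rcases le_total 0 (f x) with h0 | h0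
    · rw [max_eq_left h0, max_eq_right (by linarith), sub_zero]
    · rw [max_eq_right h0, max_eq_left (by linarith)]; ring
  have hg : g = fun x => g₁ x - g₂ x := by
    funext x
    simp only [g₁, g₂]
    rcases le_total 0 (g x) with h0 | h0
    · rw [max_eq_left h0, max_eq_right (by linarith), sub_zero]
    · rw [max_eq_right h0, max_eq_left (by linarith)]; ring
  have p1 : ∀ x, 0 ≤ f₁ x := fun x => le_max_right _ _
  have p2 : ∀ x, 0 ≤ f₂ x := fun x => le_max_right _ _
  have p3 : ∀ x, 0 ≤ g₁ x := fun x => le_max_right _ _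
  have p4 : ∀ x, 0 ≤ g₂ x := fun x => le_max_right _ _
  have B11 := hB f₁ g₁ p1 p3 fs1 gs1 M i j
  have B12 := hB f₁ g₂ p1 p4 fs1 gs2 M i j
  have B21 := hB f₂ g₁ p2 p3 fs2 gs1 M i j
  have B22 := hB f₂ g₂ p2 p4 fs2 gs2 M i j
  have split : ∑ k ∈ Finset.range M, ∑' x, |bdiff i (avg^[k] f) x| * |bdiff j (avg^[k] g) x|
      ≤ (∑ k ∈ Finset.range M, ∑' x, |bdiff i (avg^[k] f₁) x| * |bdiff j (avg^[k] g₁) x|)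
      + (∑ k ∈ Finset.range M, ∑' x, |bdiff i (avg^[k] f₁) x| * |bdiff j (avg^[k] g₂) x|)
      + (∑ k ∈ Finset.range M, ∑' x, |bdiff i (avg^[k] f₂) x| * |bdiff j (avg^[k] g₁) x|)
      + (∑ k ∈ Finset.range M, ∑' x, |bdiff i (avg^[k] f₂) x| * |bdiff j (avg^[k] g₂) x|) := by
    rw [← Finset.sum_add_distrib, ← Finset.sum_add_distrib, ← Finset.sum_add_distrib]
    refine Finset.sum_le_sum fun k _ => ?_
    have fsP : ∀ (a b : Lat d → ℝ), FS a →
        FS fun x => |bdiff i (avg^[k] a) x| * |bdiff j (avg^[k] b) x| := fun a b ha =>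
      ((ha.iter k).bdiff i).of_imp fun x hx => by simp [hx]
    rw [← (fsP f₁ g₁ fs1).summable.tsum_add (fsP f₁ g₂ fs1).summable,
      ← ((fsP f₁ g₁ fs1).add (fsP f₁ g₂ fs1)).summable.tsum_add (fsP f₂ g₁ fs2).summable,
      ← (((fsP f₁ g₁ fs1).add (fsP f₁ g₂ fs1)).add (fsP f₂ g₁ fs2)).summable.tsum_add
        (fsP f₂ g₂ fs2).summable]
    refine Summable.tsum_le_tsum (fun x => ?_) (fsP f g hfs).summable
      ((((fsP f₁ g₁ fs1).add (fsP f₁ g₂ fs1)).add (fsP f₂ g₁ fs2)).add (fsP f₂ g₂ fs2)).summable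
    have e1 : |bdiff i (avg^[k] f) x| ≤ |bdiff i (avg^[k] f₁) x| + |bdiff i (avg^[k] f₂) x| := by
      conv_lhs => rw [hf, iter_sub, bdiff_sub]
      exact abs_sub _ _
    have e2 : |bdiff j (avg^[k] g) x| ≤ |bdiff j (avg^[k] g₁) x| + |bdiff j (avg^[k] g₂) x| := by
      conv_lhs => rw [hg, iter_sub, bdiff_sub]
      exact abs_sub _ _
    calc _ ≤ (|bdiff i (avg^[k] f₁) x| + |bdiff i (avg^[k] f₂) x|)
          * (|bdiff j (avg^[k] g₁) x| + |bdiff j (avg^[k] g₂) x|) := by gcongr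
      _ = _ := by ring
  nlinarith

/-- The bilinear embedding for all exponents; the case `p < 2` follows by exchanging `f` and `g`. -/
lemma bilinear {p q : ℝ} (hpq : p.HolderConjugate q) :
    ∃ C : ℝ, 0 < C ∧ ∀ f g : Lat d → ℝ, FS f → FS g → ∀ (M : ℕ) (i j : Fin d),
      ∑ k ∈ Finset.range M, ∑' x, |bdiff i (avg^[k] f) x| * |bdiff j (avg^[k] g) x|
        ≤ C * (∑' x, |f x| ^ p + ∑' x, |g x| ^ q) := by
  rcases le_total 2 p with hp | hp
  · exact bilinear_ge_two hpq hp
  · have hq : 2 ≤ q := by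
      have := hpq.sub_one_mul_conj
      have := hpq.lt; have := hpq.symm.lt
      nlinarith
    obtain ⟨C, hC, hB⟩ := bilinear_ge_two (d := d) hpq.symm hq
    refine ⟨C, hC, fun f g hf hg M i j => ?_⟩
    have := hB g f hg hf M j i
    rw [add_comm (∑' x, |f x| ^ p)]
    simpa only [mul_comm] using this

end

/-! ### Unweighted bounds by duality, and the convolution form -/

section

variable {d : ℕ}

/-- The forward difference in direction `eᵢ`. -/
def fdiff {d : ℕ} (i : Fin d) (f : Lat d → ℝ) (x : Lat d) : ℝ := f (x + unitv d i) - f x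

/-- Truncated series for `∇ᵢ ∇ⱼ* (1 - ρ avg²)⁻¹`. -/
def opT {d : ℕ} (ρ : ℝ) (M : ℕ) (i j : Fin d) (f : Lat d → ℝ) (x : Lat d) : ℝ :=
  ∑ k ∈ Finset.range M, ρ ^ k * fdiff i (bdiff j (avg^[2 * k] f)) x

/-- The unit mass at the origin. -/
def dirac0 (d : ℕ) : Lat d → ℝ := fun x => if x = 0 then 1 else 0

lemma FS.fdiff {f : Lat d → ℝ} (hf : FS f) (i : Fin d) : FS (fdiff i f) := by
  have h1 := hf.shift (unitv d i)
  have h2 : FS (fun x => -f x) := hf.of_imp fun x hx => by simp [hx]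
  have := h1.add h2
  exact this.of_imp fun x hx => by simpa [StochHom.fdiff, sub_eq_add_neg] using hx

lemma FS.mul_left {f : Lat d → ℝ} (hf : FS f) (g : Lat d → ℝ) : FS fun x => f x * g x :=
  hf.of_imp fun x hx => by simp [hx]

lemma tsum_mul_fdiff {h : Lat d → ℝ} (hh : FS h) (F : Lat d → ℝ) (i : Fin d) :
    ∑' x, h x * fdiff i F x = ∑' x, bdiff i h x * F x := by
  simp only [fdiff, bdiff, mul_sub, sub_mul]
  have e : ∑' x, h x * F (x + unitv d i) = ∑' x, h (x - unitv d i) * F x := by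
    rw [← tsum_shift (fun x => h (x - unitv d i) * F x) (unitv d i)]
    simp
  have s1 : FS fun x => h (x - unitv d i) := by
    simpa only [sub_eq_add_neg] using hh.shift (-unitv d i)
  rw [(hh.mul_left _).summable.tsum_sub (hh.mul_left _).summable, e,
    (s1.mul_left F).summable.tsum_sub (hh.mul_left _).summable]

lemma tsum_mul_avg {h : Lat d → ℝ} (hh : FS h) (F : Lat d → ℝ) :
    ∑' x, h x * avg F x = ∑' x, avg h x * F x := by
  have e1 : ∀ x, h x * avg F x = ∑ s : Step d, wt s * (h x * F (x + stp s)) := by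
    intro x; rw [avg, Finset.mul_sum]; exact Finset.sum_congr rfl fun s _ => by ring
  have e2 : ∀ x, avg h x * F x = ∑ s : Step d, wt s * (h (x - stp s) * F x) := by
    intro x
    have := sum_step_neg (fun v => h (x + v) * F x)
    simp only [← sub_eq_add_neg] at this
    rw [this, avg, Finset.sum_mul]
    exact Finset.sum_congr rfl fun s _ => by ring
  simp_rw [e1, e2]
  have s1 : ∀ s : Step d, FS fun x => h (x - stp s) := fun s => by
    simpa only [sub_eq_add_neg] using hh.shift (-stp s)
  rw [Summable.tsum_finsetSum fun s _ => (hh.mul_left _).summable.mul_left _,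
    Summable.tsum_finsetSum fun s _ => ((s1 s).mul_left _).summable.mul_left _]
  refine Finset.sum_congr rfl fun s _ => ?_
  rw [tsum_mul_left, tsum_mul_left, ← tsum_shift (fun x => h (x - stp s) * F x) (stp s)]
  simp

lemma avg_bdiff (j : Fin d) (f : Lat d → ℝ) : avg (bdiff j f) = bdiff j (avg f) := by
  funext x
  simp only [avg, bdiff, mul_sub, Finset.sum_sub_distrib]
  congr 1
  exact Finset.sum_congr rfl fun s _ => by rw [sub_add_eq_add_sub]

lemma iter_bdiff (j : Fin d) (f : Lat d → ℝ) (k : ℕ) :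
    avg^[k] (bdiff j f) = bdiff j (avg^[k] f) := by
  induction k with
  | zero => rfl
  | succ k ih => rw [Function.iterate_succ_apply', Function.iterate_succ_apply', ih, avg_bdiff]

lemma tsum_mul_iter {h : Lat d → ℝ} (hh : FS h) (F : Lat d → ℝ) (k : ℕ) :
    ∑' x, h x * avg^[k] F x = ∑' x, avg^[k] h x * F x := by
  induction k generalizing h with
  | zero => rfl
  | succ k ih =>
    rw [Function.iterate_succ_apply', tsum_mul_avg hh, ih hh.avg, Function.iterate_succ_apply]

lemma pairing_term {h f : Lat d → ℝ} (hh : FS h) (i j : Fin d) (k : ℕ) :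
    ∑' x, h x * fdiff i (bdiff j (avg^[2 * k] f)) x
      = ∑' x, bdiff j (avg^[k] f) x * bdiff i (avg^[k] h) x := by
  rw [tsum_mul_fdiff hh, two_mul, Function.iterate_add_apply, ← iter_bdiff j (avg^[k] f),
    tsum_mul_iter (hh.bdiff i), iter_bdiff]
  exact tsum_congr fun x => mul_comm _ _

/-- Unweighted `ℓ^p` bound, uniform in `ρ` and in the truncation. -/
lemma lp_bound [NeZero d] {p : ℝ} (hp : 1 < p) :
    ∃ C : ℝ, 0 < C ∧ ∀ (ρ : ℝ), 0 ≤ ρ → ρ ≤ 1 → ∀ (M : ℕ) (i j : Fin d) (f : Lat d → ℝ), FS f →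
      ∀ X : Finset (Lat d), ∑ x ∈ X, |opT ρ M i j f x| ^ p ≤ C * ∑' x, |f x| ^ p := by
  classical
  have hpq : p.HolderConjugate (p.conjExponent) := Real.HolderConjugate.conjExponent hp
  set q := p.conjExponent
  have hq1 : 1 < q := hpq.symm.lt
  have hpq' : (p - 1) * q = p := by
    have := hpq.symm.sub_one_mul_conj; have := hpq.sub_one_mul_conj; linarith
  obtain ⟨C₀, hC₀, hB⟩ := bilinear (d := d) hpq
  set ε := (1 / (2 * C₀)) ^ (1 / (q - 1)) with hε
  have hε0 : 0 < ε := by positivity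
  have hεq : C₀ * ε ^ q = ε / 2 := by
    have h1 : ε ^ (q - 1) = 1 / (2 * C₀) := by
      rw [hε, ← Real.rpow_mul (by positivity), one_div_mul_cancel (by linarith), Real.rpow_one]
    have h2 : ε ^ q = ε ^ (q - 1) * ε := by
      rw [← Real.rpow_add_one hε0.ne']; simp
    rw [h2, h1]; field_simp
  refine ⟨2 * C₀ / ε, by positivity, ?_⟩
  intro ρ hρ0 hρ1 M i j f hf X
  set T := opT ρ M i j f with hT
  -- the dual test function; `ε` is so small that its own norm is absorbed on the left
  set h : Lat d → ℝ := fun x => if x ∈ X then ε * (T x * |T x| ^ (p - 2)) else 0 with hh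
  have hhs : FS h := X.finite_toSet.subset fun x hx => by
    by_contra hxX
    exact hx (by simp only [hh]; rw [if_neg (by simpa using hxX)])
  have e1 : ∑' x, h x * T x = ε * ∑ x ∈ X, |T x| ^ p := by
    rw [tsum_eq_sum (s := X) (fun x hx => by simp [hh, hx]), Finset.mul_sum]
    refine Finset.sum_congr rfl fun x hx => ?_
    simp only [hh, if_pos hx]
    rcases eq_or_ne (T x) 0 with h0 | h0
    · rw [h0]; simp [Real.zero_rpow (by linarith : p ≠ 0)]
    · have hpos : 0 < |T x| := abs_pos.2 h0
      have : |T x| ^ p = T x * T x * |T x| ^ (p - 2) := by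
        rw [Real.rpow_sub hpos, Real.rpow_two, sq_abs]; field_simp
      rw [this]; ring
  have e2 : ∑' x, |h x| ^ q = ε ^ q * ∑ x ∈ X, |T x| ^ p := by
    rw [tsum_eq_sum (s := X) (fun x hx => by
      simp [hh, hx, Real.zero_rpow (by linarith : q ≠ 0)]), Finset.mul_sum]
    refine Finset.sum_congr rfl fun x hx => ?_
    simp only [hh, if_pos hx]
    rcases eq_or_ne (T x) 0 with h0 | h0
    · rw [h0]; simp [Real.zero_rpow (by linarith : p ≠ 0), Real.zero_rpow (by linarith : q ≠ 0)]
    · have hpos : 0 < |T x| := abs_pos.2 h0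
      rw [abs_mul, abs_of_pos hε0, Real.mul_rpow hε0.le (abs_nonneg _), abs_mul,
        abs_of_nonneg (Real.rpow_nonneg hpos.le _)]
      congr 1
      have : |T x| * |T x| ^ (p - 2) = |T x| ^ (p - 1) := by
        rw [mul_comm, ← Real.rpow_add_one hpos.ne']; congr 1; ring
      rw [this, ← Real.rpow_mul hpos.le, hpq']
  have e3 : ∑' x, h x * T x
      = ∑ k ∈ Finset.range M, ρ ^ k * ∑' x, bdiff j (avg^[k] f) x * bdiff i (avg^[k] h) x := by
    have : ∀ x, h x * T x
        = ∑ k ∈ Finset.range M, ρ ^ k * (h x * fdiff i (bdiff j (avg^[2 * k] f)) x) := by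
      intro x
      rw [hT, opT, Finset.mul_sum]
      exact Finset.sum_congr rfl fun k _ => by ring
    simp_rw [this]
    rw [Summable.tsum_finsetSum fun k _ => (hhs.mul_left _).summable.mul_left _]
    exact Finset.sum_congr rfl fun k _ => by rw [tsum_mul_left, pairing_term hhs]
  have e4 : ∑' x, h x * T x ≤ C₀ * (∑' x, |f x| ^ p + ∑' x, |h x| ^ q) := by
    rw [e3]
    refine le_trans (Finset.sum_le_sum fun k _ => ?_) (hB f h hf hhs M j i)
    have fs := ((hf.iter k).bdiff j).mul_left (bdiff i (avg^[k] h))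
    have fs' : FS fun x => |bdiff j (avg^[k] f) x| * |bdiff i (avg^[k] h) x| :=
      fs.of_imp fun x hx => by rw [← abs_mul, hx, abs_zero]
    have h1 : ∑' x, bdiff j (avg^[k] f) x * bdiff i (avg^[k] h) x
        ≤ ∑' x, |bdiff j (avg^[k] f) x| * |bdiff i (avg^[k] h) x| :=
      Summable.tsum_le_tsum (fun x => by rw [← abs_mul]; exact le_abs_self _) fs.summable fs'.summable
    have h2 : 0 ≤ ∑' x, |bdiff j (avg^[k] f) x| * |bdiff i (avg^[k] h) x| :=
      tsum_nonneg fun x => by positivity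
    have h3 : ρ ^ k ≤ 1 := pow_le_one₀ hρ0 hρ1
    have h4 : 0 ≤ ρ ^ k := pow_nonneg hρ0 k
    calc _ ≤ ρ ^ k * ∑' x, |bdiff j (avg^[k] f) x| * |bdiff i (avg^[k] h) x| := by gcongr
      _ ≤ 1 * ∑' x, |bdiff j (avg^[k] f) x| * |bdiff i (avg^[k] h) x| := by gcongr
      _ = _ := one_mul _
  rw [e1, e2, mul_add, ← mul_assoc C₀ (ε ^ q), hεq] at e4
  rw [div_mul_eq_mul_div, le_div_iff₀ hε0]
  linarith

lemma avg_conv {ι : Type*} (Y : Finset ι) (c : ι → ℝ) (v : ι → Lat d) (F : Lat d → ℝ) :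
    avg (fun x => ∑ y ∈ Y, c y * F (x - v y)) = fun x => ∑ y ∈ Y, c y * avg F (x - v y) := by
  funext x
  simp only [avg, Finset.mul_sum]
  rw [Finset.sum_comm]
  refine Finset.sum_congr rfl fun y _ => Finset.sum_congr rfl fun s _ => ?_
  rw [sub_add_eq_add_sub]; ring

lemma iter_conv {ι : Type*} (Y : Finset ι) (c : ι → ℝ) (v : ι → Lat d) (F : Lat d → ℝ) (k : ℕ) :
    avg^[k] (fun x => ∑ y ∈ Y, c y * F (x - v y))
      = fun x => ∑ y ∈ Y, c y * avg^[k] F (x - v y) := by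
  induction k with
  | zero => rfl
  | succ k ih =>
    simp only [Function.iterate_succ_apply', ih]
    exact avg_conv Y c v _

lemma bdiff_conv {ι : Type*} (Y : Finset ι) (c : ι → ℝ) (v : ι → Lat d) (F : Lat d → ℝ) (j : Fin d) :
    bdiff j (fun x => ∑ y ∈ Y, c y * F (x - v y))
      = fun x => ∑ y ∈ Y, c y * bdiff j F (x - v y) := by
  funext x
  simp only [bdiff, mul_sub, Finset.sum_sub_distrib]
  congr 1
  exact Finset.sum_congr rfl fun y _ => by rw [sub_right_comm]

lemma fdiff_conv {ι : Type*} (Y : Finset ι) (c : ι → ℝ) (v : ι → Lat d) (F : Lat d → ℝ) (j : Fin d) :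
    fdiff j (fun x => ∑ y ∈ Y, c y * F (x - v y))
      = fun x => ∑ y ∈ Y, c y * fdiff j F (x - v y) := by
  funext x
  simp only [fdiff, mul_sub, Finset.sum_sub_distrib]
  congr 1
  exact Finset.sum_congr rfl fun y _ => by rw [sub_add_eq_add_sub]

/-- `opT` is convolution with its kernel `opT (dirac0 d)`. -/
lemma opT_conv (ρ : ℝ) (M : ℕ) (i j : Fin d) {f : Lat d → ℝ} {Y : Finset (Lat d)}
    (hY : ∀ x, f x ≠ 0 → x ∈ Y) (x : Lat d) :
    opT ρ M i j f x = ∑ y ∈ Y, f y * opT ρ M i j (dirac0 d) (x - y) := by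
  classical
  have hf : f = fun x => ∑ y ∈ Y, f y * dirac0 d (x - y) := by
    funext x
    simp only [dirac0, sub_eq_zero, mul_ite, mul_one, mul_zero, Finset.sum_ite_eq]
    by_cases h : f x = 0
    · simp [h]
    · simp [hY x h]
  conv_lhs => rw [hf]
  simp only [opT, Finset.mul_sum]
  rw [Finset.sum_comm]
  refine Finset.sum_congr rfl fun k _ => ?_
  rw [iter_conv Y f (fun y => y), bdiff_conv Y f (fun y => y), fdiff_conv Y f (fun y => y),
    Finset.mul_sum]
  exact Finset.sum_congr rfl fun y _ => by ring

end

/-! ### Fourier representation of the heat kernel -/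

section

variable {d : ℕ}

/-- Lebesgue measure on the Brillouin zone `(-π, π]^d`. -/
def zone (d : ℕ) : Measure (Fin d → ℝ) :=
  Measure.pi fun _ => volume.restrict (Set.Ioc (-Real.pi) Real.pi)

instance : IsFiniteMeasure (zone d) := by unfold zone; infer_instance

/-- The character `θ ↦ exp(i z·θ - l z_m)`, that is, the plane wave at the complex frequency obtained
from `θ` by moving its `m`-th coordinate by `i l`. -/
def wave (m : Fin d) (l : ℝ) (z : Lat d) (θ : Fin d → ℝ) : ℂ :=
  Complex.exp ((∑ i, (z i : ℂ) * (θ i : ℂ)) * Complex.I - (l : ℂ) * (z m : ℂ))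

/-- The symbol of `avg` at the complex frequency used in `wave`. -/
def symb (m : Fin d) (l : ℝ) (θ : Fin d → ℝ) : ℂ := ∑ s : Step d, (wt s : ℂ) * wave m l (stp s) θ

lemma wave_add (m : Fin d) (l : ℝ) (z w : Lat d) (θ : Fin d → ℝ) :
    wave m l (z + w) θ = wave m l z θ * wave m l w θ := by
  unfold wave
  rw [← Complex.exp_add]
  congr 1
  simp only [Pi.add_apply, Int.cast_add, add_mul, Finset.sum_add_distrib]
  ring

lemma wave_shift (m : Fin d) (l : ℝ) (z : Lat d) (θ : Fin d → ℝ) :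
    wave m l z θ = Complex.exp (-(l * (z m : ℝ) : ℝ)) * wave m 0 z θ := by
  unfold wave
  rw [← Complex.exp_add]
  congr 1
  push_cast
  ring

@[fun_prop]
lemma continuous_wave (m : Fin d) (l : ℝ) (z : Lat d) : Continuous (wave m l z) := by
  unfold wave
  fun_prop

@[fun_prop]
lemma continuous_symb (m : Fin d) (l : ℝ) : Continuous (symb (d := d) m l) := by
  unfold symb
  fun_prop

lemma norm_wave_zero (m : Fin d) (z : Lat d) (θ : Fin d → ℝ) : ‖wave m 0 z θ‖ = 1 := by
  unfold wave
  rw [Complex.norm_exp]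
  simp [Complex.mul_re]

lemma ae_zone : ∀ᵐ θ ∂(zone d), ∀ i, |θ i| ≤ Real.pi := by
  rw [ae_all_iff]
  intro i
  have h : ∀ᵐ t ∂(volume.restrict (Set.Ioc (-Real.pi) Real.pi)), |t| ≤ Real.pi := by
    filter_upwards [ae_restrict_mem measurableSet_Ioc] with t ht
    exact abs_le.2 ⟨ht.1.le, ht.2⟩
  exact (Measure.tendsto_eval_ae_ae
    (μ := fun _ : Fin d => volume.restrict (Set.Ioc (-Real.pi) Real.pi)) (i := i)).eventually h

lemma integrable_zone {F : (Fin d → ℝ) → ℂ} (hF : Continuous F) : Integrable F (zone d) := by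
  obtain ⟨C, hC⟩ := (isCompact_closedBall (0 : Fin d → ℝ) Real.pi).exists_bound_of_continuousOn
    hF.continuousOn
  refine Integrable.of_bound hF.aestronglyMeasurable C ?_
  filter_upwards [ae_zone] with θ hθ
  apply hC
  rw [mem_closedBall_zero_iff, pi_norm_le_iff_of_nonneg Real.pi_pos.le]
  exact hθ

lemma integral_circle (n : ℤ) :
    ∫ t in Set.Ioc (-Real.pi) Real.pi, Complex.exp ((n : ℂ) * (t : ℂ) * Complex.I)
      = if n = 0 then ((2 * Real.pi : ℝ) : ℂ) else 0 := by
  rw [← intervalIntegral.integral_of_le (by linarith [Real.pi_pos])]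
  split_ifs with h
  · subst h
    simp
    ring
  · have hc : (n : ℂ) * Complex.I ≠ 0 := mul_ne_zero (Int.cast_ne_zero.2 h) Complex.I_ne_zero
    have := integral_exp_mul_complex (a := -Real.pi) (b := Real.pi) hc
    simp_rw [mul_right_comm _ Complex.I] at this
    rw [this, div_eq_zero_iff]
    left
    rw [sub_eq_zero, Complex.exp_eq_exp_iff_exists_int]
    exact ⟨n, by push_cast; ring⟩

lemma integral_wave_zero (m : Fin d) (x : Lat d) :
    ∫ θ, wave m 0 x θ ∂(zone d) = (((2 * Real.pi) ^ d * dirac0 d x : ℝ) : ℂ) := by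
  have h : ∀ θ : Fin d → ℝ, wave m 0 x θ
      = ∏ i, Complex.exp ((x i : ℂ) * (θ i : ℂ) * Complex.I) := by
    intro θ
    rw [← Complex.exp_sum]
    unfold wave
    rw [Finset.sum_mul]
    simp
  simp_rw [h]
  rw [zone, integral_fintype_prod_eq_prod
    (f := fun i (t : ℝ) => Complex.exp ((x i : ℂ) * (t : ℂ) * Complex.I))]
  simp_rw [integral_circle]
  unfold dirac0
  split_ifs with hx
  · subst hx
    simp
  · obtain ⟨i, hi⟩ := Function.ne_iff.1 hx
    rw [Finset.prod_eq_zero (Finset.mem_univ i) (by simpa using hi)]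
    simp

/-- Fourier representation, with a contour shift, of the heat kernel of the lazy walk. -/
lemma heat_fourier (m : Fin d) (l : ℝ) (n : ℕ) (x : Lat d) :
    (((2 * Real.pi) ^ d * (Real.exp (l * x m) * avg^[n] (dirac0 d) x) : ℝ) : ℂ)
      = ∫ θ, symb m l θ ^ n * wave m 0 x θ ∂(zone d) := by
  induction n generalizing x with
  | zero =>
    simp only [pow_zero, one_mul, Function.iterate_zero, id_eq, integral_wave_zero]
    unfold dirac0
    split_ifs with h
    · subst h; simp
    · simp
  | succ n ih =>
    have e : ∀ θ, symb m l θ ^ (n + 1) * wave m 0 x θ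
        = ∑ s : Step d, ((wt s : ℂ) * Complex.exp (-(l * (stp s m : ℝ) : ℝ)))
          * (symb m l θ ^ n * wave m 0 (x + stp s) θ) := by
      intro θ
      rw [pow_succ, mul_assoc]
      conv_lhs => rw [symb.eq_1 m l θ]
      rw [Finset.sum_mul, Finset.mul_sum]
      refine Finset.sum_congr rfl fun s _ => ?_
      rw [wave_shift, wave_add]
      unfold symb
      ring
    simp_rw [e]
    rw [integral_finsetSum _ fun s _ => (integrable_zone (by fun_prop)).const_mul _]
    simp_rw [integral_const_mul, ← ih]
    rw [Function.iterate_succ_apply', avg]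
    simp only [Finset.mul_sum]
    rw [Complex.ofReal_sum]
    refine Finset.sum_congr rfl fun s _ => ?_
    rw [← Complex.ofReal_neg, ← Complex.ofReal_exp]
    norm_cast
    have : Real.exp (l * x m) = Real.exp (-(l * stp s m)) * Real.exp (l * ((x + stp s) m : ℤ)) := by
      rw [← Real.exp_add]
      congr 1
      simp only [Pi.add_apply]
      push_cast
      ring
    rw [this]
    ring

lemma heat_fourier_shift (m : Fin d) (l : ℝ) (n : ℕ) (x z : Lat d) :
    (((2 * Real.pi) ^ d * (Real.exp (l * x m) * avg^[n] (dirac0 d) (x + z)) : ℝ) : ℂ)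
      = ∫ θ, symb m l θ ^ n * wave m 0 x θ * wave m l z θ ∂(zone d) := by
  have e : ∀ θ, symb m l θ ^ n * wave m 0 x θ * wave m l z θ
      = Complex.exp (-(l * (z m : ℝ) : ℝ)) * (symb m l θ ^ n * wave m 0 (x + z) θ) := by
    intro θ
    rw [wave_shift m l z, wave_add]
    ring
  simp_rw [e]
  rw [integral_const_mul, ← heat_fourier, ← Complex.ofReal_neg, ← Complex.ofReal_exp]
  norm_cast
  have : Real.exp (l * x m) = Real.exp (-(l * z m)) * Real.exp (l * ((x + z) m : ℤ)) := by
    rw [← Real.exp_add]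
    congr 1
    simp only [Pi.add_apply]
    push_cast
    ring
  rw [this]
  ring

lemma heat_diff_fourier (m i j : Fin d) (l : ℝ) (n : ℕ) (x : Lat d) :
    (((2 * Real.pi) ^ d * (Real.exp (l * x m) * fdiff i (bdiff j (avg^[n] (dirac0 d))) x) : ℝ) : ℂ)
      = ∫ θ, symb m l θ ^ n * wave m 0 x θ
          * ((wave m l (unitv d i) θ - 1) * (wave m l (-unitv d j) θ - 1)) ∂(zone d) := by
  have e : ∀ θ, symb m l θ ^ n * wave m 0 x θ
          * ((wave m l (unitv d i) θ - 1) * (wave m l (-unitv d j) θ - 1))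
      = symb m l θ ^ n * wave m 0 x θ * wave m l (unitv d i + -unitv d j) θ
        - symb m l θ ^ n * wave m 0 x θ * wave m l (unitv d i) θ
        - (symb m l θ ^ n * wave m 0 x θ * wave m l (-unitv d j) θ
        - symb m l θ ^ n * wave m 0 x θ * wave m l 0 θ) := by
    intro θ
    have h0 : wave m l (0 : Lat d) θ = 1 := by simp [wave]
    rw [wave_add, h0]
    ring
  simp_rw [e]
  have hi : ∀ z, Integrable (fun θ => symb m l θ ^ n * wave m 0 x θ * wave m l z θ) (zone d) :=
    fun z => integrable_zone (by fun_prop)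
  have hi2 : ∀ z w, Integrable (fun θ => symb m l θ ^ n * wave m 0 x θ * wave m l z θ
      - symb m l θ ^ n * wave m 0 x θ * wave m l w θ) (zone d) := fun z w => (hi z).sub (hi w)
  rw [integral_sub (hi2 _ _) (hi2 _ _), integral_sub (hi _) (hi _),
    integral_sub (hi _) (hi _)]
  simp_rw [← heat_fourier_shift]
  norm_cast
  unfold fdiff bdiff
  rw [show x + unitv d i - unitv d j = x + (unitv d i + -unitv d j) by abel, add_zero,
    sub_eq_add_neg x]
  ring

end

/-! ### Second differences of the heat kernel -/

section

variable {d : ℕ}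

lemma wave_unitv (m i : Fin d) (l : ℝ) (θ : Fin d → ℝ) :
    wave m l (unitv d i) θ = Complex.exp ((θ i : ℂ) * Complex.I - (if m = i then l else 0 : ℝ)) := by
  unfold wave unitv
  congr 1
  split_ifs <;> simp

lemma wave_neg_unitv (m i : Fin d) (l : ℝ) (θ : Fin d → ℝ) :
    wave m l (-unitv d i) θ
      = Complex.exp (-((θ i : ℂ) * Complex.I - (if m = i then l else 0 : ℝ))) := by
  unfold wave unitv
  congr 1
  by_cases h : m = i
  · simp [h]; ring
  · simp [h]

/-- The symbol of `avg` at real frequencies, where it is real. -/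
def symb0 (θ : Fin d → ℝ) : ℝ := 3 / 4 + 1 / (4 * d) * ∑ i, Real.cos (θ i)

lemma symb_eq (m : Fin d) (l : ℝ) (θ : Fin d → ℝ) :
    symb m l θ = ((symb0 θ + 1 / (4 * d) * (Real.cos (θ m) * (Real.cosh l - 1)) : ℝ) : ℂ)
      - ((1 / (4 * d) * (Real.sin (θ m) * Real.sinh l) : ℝ) : ℂ) * Complex.I := by
  have key : ∀ i, wave m l (unitv d i) θ + wave m l (-unitv d i) θ
      = ((2 * Real.cos (θ i) : ℝ) : ℂ) + if m = i then
        ((2 * (Real.cos (θ m) * (Real.cosh l - 1)) : ℝ) : ℂ)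
          - ((2 * (Real.sin (θ m) * Real.sinh l) : ℝ) : ℂ) * Complex.I else 0 := by
    intro i
    rw [wave_unitv, wave_neg_unitv]
    split_ifs with h
    on_goal 1 => subst h
    all_goals
      apply Complex.ext <;>
      · simp only [Complex.add_re, Complex.add_im, Complex.sub_re, Complex.sub_im, Complex.neg_re,
          Complex.neg_im, Complex.exp_re, Complex.exp_im, Complex.mul_re, Complex.mul_im, Complex.I_re,
          Complex.I_im, Complex.ofReal_re, Complex.ofReal_im, mul_zero, mul_one, sub_zero, zero_sub,
          add_zero, neg_zero, neg_neg, Real.cos_neg, Real.sin_neg, Real.exp_zero, one_mul,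
          Real.cosh_eq, Real.sinh_eq]
        ring
  unfold symb
  rw [Fintype.sum_option, Fintype.sum_prod_type]
  simp only [Fintype.sum_bool, wt, stp, key, ← Finset.mul_sum, Finset.sum_add_distrib,
    Finset.sum_ite_eq, Finset.mem_univ, if_true]
  have h0 : wave m l (0 : Lat d) θ = 1 := by simp [wave]
  rw [h0, ← Complex.ofReal_sum, ← Finset.mul_sum, symb0]
  push_cast
  have hd : (d : ℂ) ≠ 0 := by
    have := m.pos
    exact_mod_cast this.ne'
  field_simp
  ring

lemma cosh_sub_one_le {l : ℝ} (hl : |l| ≤ 1) : Real.cosh l - 1 ≤ l ^ 2 := by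
  have h1 := Real.cosh_le_exp_half_sq l
  have hl2 : l ^ 2 ≤ 1 := by rw [← sq_abs]; nlinarith [abs_nonneg l]
  have h2 := Real.abs_exp_sub_one_le (x := l ^ 2 / 2) (by
    rw [abs_of_nonneg (by positivity)]; linarith)
  rw [abs_of_nonneg (a := l ^ 2 / 2) (by positivity)] at h2
  linarith [le_abs_self (Real.exp (l ^ 2 / 2) - 1)]

lemma symb0_bounds [NeZero d] {θ : Fin d → ℝ} (hθ : ∀ i, |θ i| ≤ Real.pi) :
    0 ≤ symb0 θ ∧ symb0 θ ≤ 1 - 1 / (2 * d * Real.pi ^ 2) * ∑ i, θ i ^ 2 := by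
  have hd := one_le_cast_d (d := d)
  have hs1 : -(d : ℝ) ≤ ∑ i, Real.cos (θ i) := by
    have := Finset.sum_le_sum fun i (_ : i ∈ Finset.univ) => Real.neg_one_le_cos (θ i)
    simpa using this
  have hs2 : ∑ i, Real.cos (θ i) ≤ d - 2 / Real.pi ^ 2 * ∑ i, θ i ^ 2 := by
    have := Finset.sum_le_sum fun i (_ : i ∈ Finset.univ) => Real.cos_le_one_sub_mul_cos_sq (hθ i)
    simpa [Finset.sum_sub_distrib, ← Finset.mul_sum] using this
  have hc : 0 < 1 / (4 * (d : ℝ)) := by positivity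
  have hcd : 1 / (4 * (d : ℝ)) * d = 1 / 4 := by field_simp
  unfold symb0
  constructor
  · nlinarith
  · have := mul_le_mul_of_nonneg_left hs2 hc.le
    rw [mul_sub, hcd] at this
    have e : 1 / (4 * (d : ℝ)) * (2 / Real.pi ^ 2 * ∑ i, θ i ^ 2)
        = 1 / (2 * d * Real.pi ^ 2) * ∑ i, θ i ^ 2 := by
      have := Real.pi_pos
      field_simp
      norm_num
    linarith

lemma norm_symb_sq_le [NeZero d] (m : Fin d) {l : ℝ} (hl : |l| ≤ 1) {θ : Fin d → ℝ}
    (hθ : ∀ i, |θ i| ≤ Real.pi) :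
    ‖symb m l θ‖ ^ 2 ≤ Real.exp (-(1 / (2 * d * Real.pi ^ 2)) * ∑ i, θ i ^ 2 + 6 * l ^ 2) := by
  have hd := one_le_cast_d (d := d)
  obtain ⟨h0, h1⟩ := symb0_bounds hθ
  have hQ : 0 ≤ 1 / (2 * d * Real.pi ^ 2) * ∑ i, θ i ^ 2 :=
    mul_nonneg (by positivity) (Finset.sum_nonneg fun i _ => sq_nonneg _)
  have hl2 : l ^ 2 ≤ 1 := by rw [← sq_abs]; nlinarith [abs_nonneg l]
  have hch := cosh_sub_one_le hl
  have hch1 := Real.one_le_cosh l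
  have hsh := Real.cosh_sq l
  have hc0 : 0 < 1 / (4 * (d : ℝ)) := by positivity
  have hc1 : 1 / (4 * (d : ℝ)) ≤ 1 := by rw [div_le_one (by positivity)]; linarith
  set t := 1 / (4 * (d : ℝ)) * (Real.cos (θ m) * (Real.cosh l - 1)) with ht
  set b := 1 / (4 * (d : ℝ)) * (Real.sin (θ m) * Real.sinh l) with hb
  have hn : ‖symb m l θ‖ ^ 2 = (symb0 θ + t) ^ 2 + b ^ 2 := by
    rw [symb_eq, ← Complex.normSq_eq_norm_sq, Complex.normSq_apply]
    simp only [Complex.sub_re, Complex.sub_im, Complex.ofReal_re, Complex.ofReal_im, Complex.mul_re,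
      Complex.mul_im, Complex.I_re, Complex.I_im]
    ring
  have htb : |t| ≤ l ^ 2 := by
    rw [ht, abs_mul, abs_mul, abs_of_pos hc0, abs_of_nonneg (by linarith : 0 ≤ Real.cosh l - 1)]
    calc _ ≤ 1 * (1 * (l ^ 2)) := by gcongr; exact Real.abs_cos_le_one _
      _ = l ^ 2 := by ring
  have hbb : b ^ 2 ≤ 3 * l ^ 2 := by
    rw [hb, mul_pow, mul_pow]
    have hs : Real.sin (θ m) ^ 2 ≤ 1 := by nlinarith [Real.sin_sq_add_cos_sq (θ m)]
    have hsh2 : Real.sinh l ^ 2 ≤ 3 * l ^ 2 := by nlinarith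
    calc _ ≤ 1 ^ 2 * (1 * (3 * l ^ 2)) := by gcongr
      _ = 3 * l ^ 2 := by ring
  rw [hn]
  refine le_trans ?_ (Real.add_one_le_exp _)
  have := abs_le.1 htb
  have h2 : symb0 θ ^ 2 ≤ symb0 θ := by nlinarith
  have h3 : symb0 θ * t ≤ l ^ 2 := by nlinarith
  have h4 : t ^ 2 ≤ l ^ 2 := by rw [← sq_abs]; nlinarith [abs_nonneg t]
  nlinarith

/-- On the time scale of the contour shift, `l² (k + 1) = 1`, the shift costs only a constant. -/
lemma norm_symb_pow_le [NeZero d] (m : Fin d) {l : ℝ} {k : ℕ} (hl : l ^ 2 * (k + 1) = 1)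
    {θ : Fin d → ℝ} (hθ : ∀ i, |θ i| ≤ Real.pi) :
    ‖symb m l θ‖ ^ (2 * k)
      ≤ Real.exp 7 * Real.exp (-(1 / (2 * d * Real.pi ^ 2) * (k + 1)) * ∑ i, θ i ^ 2) := by
  have hd := one_le_cast_d (d := d)
  have hk : (0 : ℝ) ≤ k := k.cast_nonneg
  have hl1 : |l| ≤ 1 := by
    rw [← sq_le_one_iff_abs_le_one]
    nlinarith [sq_nonneg l]
  have hq : 1 / (2 * d * Real.pi ^ 2) * ∑ i, θ i ^ 2 ≤ 1 / 2 := by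
    have : ∑ i, θ i ^ 2 ≤ ∑ _i : Fin d, Real.pi ^ 2 := Finset.sum_le_sum fun i _ => by
      rw [← sq_abs]
      exact pow_le_pow_left₀ (abs_nonneg _) (hθ i) 2
    simp only [Finset.sum_const, Finset.card_univ, Fintype.card_fin, nsmul_eq_mul] at this
    calc _ ≤ 1 / (2 * d * Real.pi ^ 2) * (d * Real.pi ^ 2) := by gcongr
      _ = 1 / 2 := by have := Real.pi_pos; field_simp
  rw [pow_mul]
  refine (pow_le_pow_left₀ (sq_nonneg _) (norm_symb_sq_le m hl1 hθ) k).trans ?_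
  rw [← Real.exp_nat_mul, ← Real.exp_add]
  apply Real.exp_le_exp.2
  nlinarith [sq_nonneg l]

lemma norm_exp_sub_one_le_four {z : ℂ} (hz : z.re ≤ 1) : ‖Complex.exp z - 1‖ ≤ 4 * ‖z‖ := by
  by_cases h : ‖z‖ ≤ 1
  · linarith [Complex.norm_exp_sub_one_le h, norm_nonneg z]
  · have h1 : ‖Complex.exp z‖ ≤ Real.exp 1 := by
      rw [Complex.norm_exp]; exact Real.exp_le_exp.2 hz
    have h2 := norm_sub_le (Complex.exp z) 1
    rw [norm_one] at h2
    linarith [Real.exp_one_lt_d9]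

lemma norm_freq_le (m i : Fin d) {l : ℝ} (θ : Fin d → ℝ) :
    ‖(θ i : ℂ) * Complex.I - ((if m = i then l else 0 : ℝ) : ℂ)‖ ^ 2 ≤ ∑ i, θ i ^ 2 + l ^ 2 := by
  rw [← Complex.normSq_eq_norm_sq, Complex.normSq_apply]
  have := Finset.single_le_sum (f := fun i => θ i ^ 2) (fun i _ => sq_nonneg _) (Finset.mem_univ i)
  split_ifs <;> simp <;> nlinarith [sq_nonneg l]

lemma norm_factor_le (m i j : Fin d) {l : ℝ} (hl : |l| ≤ 1) (θ : Fin d → ℝ) :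
    ‖(wave m l (unitv d i) θ - 1) * (wave m l (-unitv d j) θ - 1)‖
      ≤ 16 * (∑ i, θ i ^ 2 + l ^ 2) := by
  rw [norm_mul, wave_unitv, wave_neg_unitv]
  have hl' := abs_le.1 hl
  have h1 := norm_exp_sub_one_le_four (z := (θ i : ℂ) * Complex.I - ((if m = i then l else 0 : ℝ) : ℂ))
    (by split_ifs <;> simp; linarith)
  have h2 := norm_exp_sub_one_le_four
    (z := -((θ j : ℂ) * Complex.I - ((if m = j then l else 0 : ℝ) : ℂ)))
    (by split_ifs <;> simp; linarith)
  rw [norm_neg] at h2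
  have h3 := norm_freq_le m i (l := l) θ
  have h4 := norm_freq_le m j (l := l) θ
  refine (mul_le_mul h1 h2 (norm_nonneg _) (by positivity)).trans ?_
  nlinarith [sq_nonneg (‖(θ i : ℂ) * Complex.I - ((if m = i then l else 0 : ℝ) : ℂ)‖
    - ‖(θ j : ℂ) * Complex.I - ((if m = j then l else 0 : ℝ) : ℂ)‖)]

lemma integrable_gauss_zone (b : ℝ) :
    Integrable (fun θ : Fin d → ℝ => Real.exp (-b * ∑ i, θ i ^ 2)) (zone d) := by
  have h := (integrable_zone (d := d)
    (F := fun θ => ((Real.exp (-b * ∑ i, θ i ^ 2) : ℝ) : ℂ)) (by fun_prop)).norm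
  simpa only [Complex.norm_real, Real.norm_eq_abs, Real.abs_exp] using h

lemma integral_gauss_zone {b : ℝ} (hb : 0 < b) :
    ∫ θ, Real.exp (-b * ∑ i, θ i ^ 2) ∂(zone d) ≤ Real.sqrt (Real.pi / b) ^ d := by
  have h : ∀ θ : Fin d → ℝ, Real.exp (-b * ∑ i, θ i ^ 2) = ∏ i, Real.exp (-b * θ i ^ 2) := by
    intro θ
    rw [Finset.mul_sum, Real.exp_sum]
  simp_rw [h]
  rw [zone, integral_fintype_prod_eq_prod (𝕜 := ℝ) (f := fun _ (t : ℝ) => Real.exp (-b * t ^ 2))]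
  rw [Finset.prod_const, Finset.card_univ, Fintype.card_fin]
  refine pow_le_pow_left₀ (integral_nonneg fun t => (Real.exp_pos _).le) ?_ d
  rw [← integral_gaussian b]
  exact setIntegral_le_integral (integrable_exp_neg_mul_sq hb)
    (Filter.Eventually.of_forall fun t => (Real.exp_pos _).le)

/-- Gaussian-scale bound, with exponential off-diagonal decay in every coordinate, for the second
differences of the heat kernel. -/
lemma heat_diff_bound [NeZero d] : ∃ C > 0, ∀ (m i j : Fin d) (k : ℕ) (x : Lat d),
    |fdiff i (bdiff j (avg^[2 * k] (dirac0 d))) x|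
      ≤ C / Real.sqrt (k + 1) ^ (d + 2) * Real.exp (-(|(x m : ℝ)| / Real.sqrt (k + 1))) := by
  have hd := one_le_cast_d (d := d)
  have hπ := Real.pi_pos
  set c := 1 / (2 * (d : ℝ) * Real.pi ^ 2) with hc
  have hc0 : 0 < c := by positivity
  refine ⟨16 * Real.exp 7 * (2 / c + 1) * Real.sqrt (Real.pi / (c / 2)) ^ d, by positivity, ?_⟩
  intro m i j k x
  set s := Real.sqrt (k + 1) with hs
  have hs2 : s ^ 2 = k + 1 := Real.sq_sqrt (by positivity)
  have hs0 : 0 < s := Real.sqrt_pos.2 (by positivity)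
  -- contour shift of size `1 / √(k + 1)`, with the sign of `x m`
  obtain ⟨l, hl, hlx⟩ : ∃ l : ℝ, l ^ 2 = 1 / s ^ 2 ∧ l * x m = |(x m : ℝ)| / s := by
    rcases le_total 0 (x m : ℝ) with h | h
    · exact ⟨1 / s, by rw [div_pow, one_pow], by rw [abs_of_nonneg h]; ring⟩
    · exact ⟨-1 / s, by rw [div_pow]; norm_num, by rw [abs_of_nonpos h]; ring⟩
  have hlk : l ^ 2 * (k + 1) = 1 := by rw [hl, hs2]; field_simp
  have hl1 : |l| ≤ 1 := by
    rw [← sq_le_one_iff_abs_le_one, hl, hs2, div_le_one (by positivity)]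
    linarith [(k.cast_nonneg : (0 : ℝ) ≤ k)]
  have hF := heat_diff_fourier m i j l (2 * k) x
  set D := fdiff i (bdiff j (avg^[2 * k] (dirac0 d))) x
  have hpt : ∀ᵐ θ ∂(zone d), ‖symb m l θ ^ (2 * k) * wave m 0 x θ
          * ((wave m l (unitv d i) θ - 1) * (wave m l (-unitv d j) θ - 1))‖
      ≤ (16 * Real.exp 7 * (2 / c + 1) / s ^ 2) * Real.exp (-(c / 2 * s ^ 2) * ∑ i, θ i ^ 2) := by
    filter_upwards [ae_zone] with θ hθ
    have h1 := norm_symb_pow_le m hlk hθ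
    have h2 := norm_factor_le m i j hl1 θ
    rw [← hc, ← hs2] at h1
    rw [hl] at h2
    rw [norm_mul, norm_mul, norm_wave_zero, mul_one, norm_pow]
    refine (mul_le_mul h1 h2 (norm_nonneg _) (by positivity)).trans ?_
    set Q := ∑ i, θ i ^ 2
    have hQ : 0 ≤ Q := Finset.sum_nonneg fun i _ => sq_nonneg _
    have e1 : Real.exp (-(c * s ^ 2) * Q)
        = Real.exp (-(c / 2 * s ^ 2) * Q) * Real.exp (-(c / 2 * s ^ 2) * Q) := by
      rw [← Real.exp_add]; congr 1; ring
    have e2 : (Q * s ^ 2 + 1) * Real.exp (-(c / 2 * s ^ 2) * Q) ≤ 2 / c + 1 := by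
      have h3 := Real.add_one_le_exp (c / 2 * s ^ 2 * Q)
      rw [neg_mul, Real.exp_neg, ← div_eq_mul_inv, div_le_iff₀ (Real.exp_pos _)]
      have h4 : 0 ≤ c / 2 * s ^ 2 * Q := by positivity
      calc Q * s ^ 2 + 1 = 2 / c * (c / 2 * s ^ 2 * Q) + 1 := by field_simp
        _ ≤ 2 / c * (c / 2 * s ^ 2 * Q + 1) + (c / 2 * s ^ 2 * Q + 1) := by
          have : 0 < 2 / c := by positivity
          nlinarith
        _ = (2 / c + 1) * (c / 2 * s ^ 2 * Q + 1) := by ring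
        _ ≤ _ := by gcongr
    rw [e1]
    calc _ = (16 * Real.exp 7 / s ^ 2 * Real.exp (-(c / 2 * s ^ 2) * Q)) *
          ((Q * s ^ 2 + 1) * Real.exp (-(c / 2 * s ^ 2) * Q)) := by field_simp
      _ ≤ (16 * Real.exp 7 / s ^ 2 * Real.exp (-(c / 2 * s ^ 2) * Q)) * (2 / c + 1) := by gcongr
      _ = _ := by ring
  have h_norm := norm_integral_le_of_norm_le ((integrable_gauss_zone (d := d) (c / 2 * s ^ 2)).const_mul
    (16 * Real.exp 7 * (2 / c + 1) / s ^ 2)) hpt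
  rw [← hF, Complex.norm_real, Real.norm_eq_abs, abs_mul, abs_mul, Real.abs_exp, hlx,
    abs_of_pos (by positivity), integral_const_mul] at h_norm
  have hg := integral_gauss_zone (d := d) (b := c / 2 * s ^ 2) (by positivity)
  have hsq : Real.sqrt (Real.pi / (c / 2 * s ^ 2)) = Real.sqrt (Real.pi / (c / 2)) / s := by
    rw [← div_div, Real.sqrt_div (by positivity), Real.sqrt_sq hs0.le]
  rw [hsq, div_pow] at hg
  have h2π : 1 ≤ (2 * Real.pi) ^ d := one_le_pow₀ (by linarith [Real.pi_gt_three])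
  have hE : 0 < Real.exp (|(x m : ℝ)| / s) := Real.exp_pos _
  have : Real.exp (|(x m : ℝ)| / s) * |D|
      ≤ 16 * Real.exp 7 * (2 / c + 1) / s ^ 2 * (Real.sqrt (Real.pi / (c / 2)) ^ d / s ^ d) :=
    calc _ = 1 * (Real.exp (|(x m : ℝ)| / s) * |D|) := (one_mul _).symm
      _ ≤ (2 * Real.pi) ^ d * (Real.exp (|(x m : ℝ)| / s) * |D|) := by gcongr
      _ ≤ _ := h_norm
      _ ≤ _ := by gcongr
  rw [Real.exp_neg, ← div_eq_mul_inv, le_div_iff₀ hE]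
  calc _ = Real.exp (|(x m : ℝ)| / s) * |D| := mul_comm _ _
    _ ≤ _ := this
    _ = _ := by rw [pow_add]; field_simp

end

/-! ### Size of the kernel -/

section

variable {d : ℕ}

/-- The weight base `1 + |x|`. -/
def jap (x : Lat d) : ℝ := latnorm x + 1

lemma one_le_jap (x : Lat d) : 1 ≤ jap x := by
  unfold jap latnorm vnorm
  linarith [Real.sqrt_nonneg (∑ i, ((x i : ℝ)) ^ 2)]

lemma jap_pos (x : Lat d) : 0 < jap x := lt_of_lt_of_le one_pos (one_le_jap x)

lemma vnorm_eq_norm (v : Fin d → ℝ) : vnorm v = ‖(WithLp.toLp 2 v : EuclideanSpace ℝ (Fin d))‖ := by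
  rw [EuclideanSpace.norm_eq, vnorm]
  simp

lemma latnorm_add_le (x y : Lat d) : latnorm (x + y) ≤ latnorm x + latnorm y := by
  unfold latnorm
  rw [vnorm_eq_norm, vnorm_eq_norm, vnorm_eq_norm]
  refine le_trans (le_of_eq ?_) (norm_add_le _ _)
  congr 1
  ext i
  simp

lemma latnorm_neg (x : Lat d) : latnorm (-x) = latnorm x := by
  unfold latnorm vnorm
  simp

lemma latnorm_nonneg (x : Lat d) : 0 ≤ latnorm x := Real.sqrt_nonneg _

lemma abs_le_vnorm (v : Fin d → ℝ) (i : Fin d) : |v i| ≤ vnorm v := by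
  unfold vnorm
  rw [← Real.sqrt_sq_eq_abs]
  exact Real.sqrt_le_sqrt
    (Finset.single_le_sum (f := fun i => v i ^ 2) (fun i _ => sq_nonneg _) (Finset.mem_univ i))

lemma exists_coord [NeZero d] (x : Lat d) : ∃ m : Fin d, latnorm x ≤ d * |(x m : ℝ)| := by
  have hd := one_le_cast_d (d := d)
  obtain ⟨m, -, hm⟩ := Finset.exists_max_image Finset.univ (fun i => |(x i : ℝ)|) Finset.univ_nonempty
  refine ⟨m, ?_⟩
  unfold latnorm vnorm
  rw [Real.sqrt_le_left (by positivity)]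
  calc ∑ i, (x i : ℝ) ^ 2 ≤ ∑ _i : Fin d, |(x m : ℝ)| ^ 2 := Finset.sum_le_sum fun i _ => by
        rw [← sq_abs]
        exact pow_le_pow_left₀ (abs_nonneg _) (hm i (Finset.mem_univ i)) 2
    _ = d * |(x m : ℝ)| ^ 2 := by simp
    _ ≤ (d * |(x m : ℝ)|) ^ 2 := by
      rw [mul_pow]
      have : (d : ℝ) ≤ d ^ 2 := by nlinarith
      gcongr

/-- One term of the series is controlled by an increment of the bounded monotone sequence
`n ↦ √n / (1 + r + √n)`. -/
lemma term_le [NeZero d] {r : ℝ} (hr : 0 ≤ r) (k : ℕ) :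
    1 / Real.sqrt (k + 1) ^ (d + 2) * Real.exp (-(r / Real.sqrt (k + 1)))
      ≤ 2 * Real.exp 1 * ((d + 1).factorial * Real.exp 1) / (1 + r) ^ d *
        (Real.sqrt (k + 1) / (1 + r + Real.sqrt (k + 1)) - Real.sqrt k / (1 + r + Real.sqrt k)) := by
  set t := Real.sqrt (k + 1) with ht
  set s := Real.sqrt k with hs
  set a := 1 + r with ha
  have hk : (0 : ℝ) ≤ k := k.cast_nonneg
  have ht2 : t ^ 2 = k + 1 := Real.sq_sqrt (by positivity)
  have hs2 : s ^ 2 = k := Real.sq_sqrt (by positivity)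
  have ht1 : 1 ≤ t := Real.one_le_sqrt.2 (by linarith)
  have ht0 : 0 < t := by linarith
  have hs0 : 0 ≤ s := Real.sqrt_nonneg _
  have hst : s ≤ t := Real.sqrt_le_sqrt (by linarith)
  have ha0 : 1 ≤ a := by linarith
  have ha1 : 0 < a := by linarith
  have h1 : (a / t) / (t + a) ^ 2 ≤ 2 * (t / (a + t) - s / (a + s)) := by
    rw [div_sub_div _ _ (by positivity) (by positivity)]
    have e : t * (a + s) - (a + t) * s = a * (t - s) := by ring
    rw [e, div_div, mul_div_assoc', div_le_div_iff₀ (by positivity) (by positivity)]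
    have h2 : 1 ≤ 2 * (t - s) * t := by nlinarith
    calc a * ((a + t) * (a + s)) ≤ a * ((a + t) * (a + t)) * 1 := by rw [mul_one]; gcongr
      _ ≤ a * ((a + t) * (a + t)) * (2 * (t - s) * t) := by gcongr
      _ = _ := by ring
  have h3 : Real.exp (-(r / t)) ≤ Real.exp 1 * Real.exp (-(a / t)) := by
    rw [← Real.exp_add]
    apply Real.exp_le_exp.2
    have : 1 / t ≤ 1 := by rw [div_le_one ht0]; exact ht1
    have : a / t = 1 / t + r / t := by rw [ha]; ring
    linarith
  set y := a / t with hy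
  have hy0 : 0 < y := by positivity
  obtain ⟨n, hn⟩ : ∃ n, d = n + 1 := ⟨d - 1, (Nat.succ_pred_eq_of_ne_zero (NeZero.ne d)).symm⟩
  have h4 : y ^ d * Real.exp (-y) ≤ ((d + 1).factorial * Real.exp 1) * (y / (1 + y) ^ 2) := by
    have h5 := Real.pow_div_factorial_le_exp (1 + y) (by positivity) (d + 1)
    rw [div_le_iff₀ (by positivity), Real.exp_add] at h5
    rw [Real.exp_neg, ← div_eq_mul_inv, mul_div_assoc', div_le_div_iff₀ (Real.exp_pos _) (by positivity)]
    calc y ^ d * (1 + y) ^ 2 = y * (y ^ n * (1 + y) ^ 2) := by rw [hn]; ring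
      _ ≤ y * ((1 + y) ^ n * (1 + y) ^ 2) := by gcongr; linarith
      _ = y * (1 + y) ^ (d + 1) := by rw [hn]; ring
      _ ≤ y * (Real.exp 1 * Real.exp y * (d + 1).factorial) := by gcongr
      _ = _ := by ring
  have e6 : y / (1 + y) ^ 2 = t ^ 2 * (y / (t + a) ^ 2) := by
    rw [hy]
    field_simp
  have e7 : 1 / t ^ (d + 2) = y ^ d / a ^ d / t ^ 2 := by
    rw [hy, div_pow, pow_add]
    field_simp
  calc 1 / t ^ (d + 2) * Real.exp (-(r / t))
      ≤ 1 / t ^ (d + 2) * (Real.exp 1 * Real.exp (-y)) := by gcongr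
    _ = Real.exp 1 / a ^ d / t ^ 2 * (y ^ d * Real.exp (-y)) := by rw [e7]; ring
    _ ≤ Real.exp 1 / a ^ d / t ^ 2 * (((d + 1).factorial * Real.exp 1) * (y / (1 + y) ^ 2)) := by
        gcongr
    _ = Real.exp 1 * ((d + 1).factorial * Real.exp 1) / a ^ d * (y / (t + a) ^ 2) := by
        rw [e6]; field_simp
    _ ≤ Real.exp 1 * ((d + 1).factorial * Real.exp 1) / a ^ d * (2 * (t / (a + t) - s / (a + s))) := by
        gcongr
    _ = _ := by ring

/-- The Calderón–Zygmund size condition for the kernel of `opT`, uniformly in the parameters. -/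
lemma kernel_bound [NeZero d] : ∃ C > 0, ∀ (ρ : ℝ), 0 ≤ ρ → ρ ≤ 1 → ∀ (M : ℕ) (i j : Fin d) (x : Lat d),
    |opT ρ M i j (dirac0 d) x| ≤ C / jap x ^ d := by
  have hd := one_le_cast_d (d := d)
  obtain ⟨C, hC, hB⟩ := heat_diff_bound (d := d)
  set B := 2 * Real.exp 1 * ((d + 1).factorial * Real.exp 1) with hBd
  have hB0 : 0 < B := by positivity
  refine ⟨C * B * (d : ℝ) ^ d, by positivity, ?_⟩
  intro ρ h0 h1 M i j x
  obtain ⟨m, hm⟩ := exists_coord x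
  set r := |(x m : ℝ)|
  have hr : 0 ≤ r := abs_nonneg _
  have hsum : ∀ M : ℕ, ∑ k ∈ Finset.range M, (B / (1 + r) ^ d *
        (Real.sqrt (k + 1) / (1 + r + Real.sqrt (k + 1)) - Real.sqrt k / (1 + r + Real.sqrt k)))
      ≤ B / (1 + r) ^ d := by
    intro M
    rw [← Finset.mul_sum]
    have := Finset.sum_range_sub (fun n : ℕ => Real.sqrt n / (1 + r + Real.sqrt n)) M
    push_cast at this
    rw [this]
    have hle : Real.sqrt M / (1 + r + Real.sqrt M) ≤ 1 := by
      rw [div_le_one (by positivity)]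
      linarith
    calc _ ≤ B / (1 + r) ^ d * 1 := by gcongr; simpa using hle
      _ = _ := mul_one _
  calc |opT ρ M i j (dirac0 d) x|
      ≤ ∑ k ∈ Finset.range M, |ρ ^ k * fdiff i (bdiff j (avg^[2 * k] (dirac0 d))) x| :=
        Finset.abs_sum_le_sum_abs _ _
    _ ≤ ∑ k ∈ Finset.range M, C * (B / (1 + r) ^ d *
        (Real.sqrt (k + 1) / (1 + r + Real.sqrt (k + 1)) - Real.sqrt k / (1 + r + Real.sqrt k))) := by
        refine Finset.sum_le_sum fun k _ => ?_
        rw [abs_mul, abs_of_nonneg (pow_nonneg h0 k)]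
        calc _ ≤ 1 * |fdiff i (bdiff j (avg^[2 * k] (dirac0 d))) x| := by
              gcongr; exact pow_le_one₀ h0 h1
          _ ≤ C / Real.sqrt (k + 1) ^ (d + 2) * Real.exp (-(r / Real.sqrt (k + 1))) := by
              rw [one_mul]; exact hB m i j k x
          _ = C * (1 / Real.sqrt (k + 1) ^ (d + 2) * Real.exp (-(r / Real.sqrt (k + 1)))) := by ring
          _ ≤ _ := mul_le_mul_of_nonneg_left (term_le (d := d) hr k) hC.le
    _ ≤ C * (B / (1 + r) ^ d) := by rw [← Finset.mul_sum]; gcongr; exact hsum M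
    _ ≤ C * B * (d : ℝ) ^ d / jap x ^ d := by
        rw [mul_div_assoc', div_le_div_iff₀ (by positivity) (pow_pos (jap_pos x) d), mul_assoc (C * B),
          ← mul_pow]
        have : jap x ≤ d * (1 + r) := by unfold jap; linarith
        gcongr
        exact (jap_pos x).le

end

/-! ### Lattice sums -/

section

variable {d : ℕ}

/-- Telescoping bound for the partial sums of `n ^ (-β)`, `β < 1`. -/
lemma rpow_neg_le_sub {β : ℝ} (h0 : 0 ≤ β) (h1 : β < 1) (n : ℕ) :
    (1 - β) * (1 + (n : ℝ)) ^ (-β) ≤ ((n : ℝ) + 1) ^ (1 - β) - (n : ℝ) ^ (1 - β) := by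
  have hn : (0 : ℝ) ≤ n := n.cast_nonneg
  have hn1 : (0 : ℝ) < n + 1 := by linarith
  have hb := rpow_one_add_le_one_add_mul_self (s := -(1 / ((n : ℝ) + 1)))
    (by rw [neg_le_neg_iff, div_le_one hn1]; linarith) (p := 1 - β) (by linarith) (by linarith)
  have e : 1 + -(1 / ((n : ℝ) + 1)) = n / (n + 1) := by field_simp; ring
  rw [e, Real.div_rpow hn hn1.le, div_le_iff₀ (by positivity)] at hb
  have e2 : ((n : ℝ) + 1) ^ (-β) = ((n : ℝ) + 1) ^ (1 - β) / (n + 1) := by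
    rw [show -β = (1 - β) - 1 by ring, Real.rpow_sub_one hn1.ne']
  rw [add_comm 1 (n : ℝ), e2]
  have : (1 + (1 - β) * -(1 / ((n : ℝ) + 1))) * ((n : ℝ) + 1) ^ (1 - β)
      = ((n : ℝ) + 1) ^ (1 - β) - (1 - β) * (((n : ℝ) + 1) ^ (1 - β) / (n + 1)) := by ring
  linarith

/-- Telescoping bound for the tails of a convergent sum of `t ^ (-(1 + σ))`. -/
lemma rpow_tail_le_sub {σ t : ℝ} (hσ : 0 < σ) (ht : 1 ≤ t) :
    t ^ (-(1 + σ)) ≤ 2 ^ (1 + σ) / σ * (t ^ (-σ) - (t + 1) ^ (-σ)) := by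
  have ht0 : 0 < t := by linarith
  have ht1 : 0 < t + 1 := by linarith
  have h1 : (t + 1) ^ (-σ) * (1 + σ / (t + 1)) ≤ t ^ (-σ) := by
    have e : t ^ (-σ) = (t + 1) ^ (-σ) * (t / (t + 1)) ^ (-σ) := by
      rw [← Real.mul_rpow (by positivity) (by positivity)]
      congr 1
      field_simp
    rw [e]
    gcongr
    rw [Real.rpow_def_of_pos (by positivity)]
    have h2 := Real.log_le_sub_one_of_pos (x := t / (t + 1)) (by positivity)
    have h3 : t / (t + 1) - 1 = -(1 / (t + 1)) := by field_simp; ring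
    refine le_trans ?_ (Real.exp_le_exp.2 (show σ / (t + 1) ≤ _ from ?_))
    · linarith [Real.add_one_le_exp (σ / (t + 1))]
    · rw [h3] at h2
      have := mul_le_mul_of_nonneg_right h2 hσ.le
      have e4 : σ / (t + 1) = 1 / (t + 1) * σ := by ring
      linarith
  have h2 : σ * (t + 1) ^ (-(1 + σ)) ≤ t ^ (-σ) - (t + 1) ^ (-σ) := by
    have : (t + 1) ^ (-(1 + σ)) = (t + 1) ^ (-σ) / (t + 1) := by
      rw [show -(1 + σ) = -σ - 1 by ring, Real.rpow_sub_one ht1.ne']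
    rw [this]
    have e : (t + 1) ^ (-σ) * (1 + σ / (t + 1)) = (t + 1) ^ (-σ) + σ * ((t + 1) ^ (-σ) / (t + 1)) := by
      ring
    linarith
  have h3 : t ^ (-(1 + σ)) ≤ 2 ^ (1 + σ) * (t + 1) ^ (-(1 + σ)) := by
    rw [Real.rpow_neg ht0.le, Real.rpow_neg ht1.le, ← div_eq_mul_inv, ← one_div,
      div_le_div_iff₀ (by positivity) (by positivity), one_mul,
      ← Real.mul_rpow (by norm_num) ht0.le]
    exact Real.rpow_le_rpow (by positivity) (by linarith) (by positivity)
  calc _ ≤ _ := h3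
    _ = 2 ^ (1 + σ) / σ * (σ * (t + 1) ^ (-(1 + σ))) := by field_simp
    _ ≤ _ := by gcongr

/-- The one-dimensional model of `lattice_sum_bound`; the sum is split at `n ≈ r`. -/
lemma sum_nat_bound {β κ : ℝ} (h0 : 0 ≤ β) (h1 : β < 1) (h2 : 1 < β + κ) :
    ∃ C > 0, ∀ r : ℝ, 1 ≤ r → ∀ N : ℕ,
      ∑ n ∈ Finset.range N, (1 + (n : ℝ)) ^ (-β) * (r + n) ^ (-κ) ≤ C * r ^ (1 - β - κ) := by
  set σ := β + κ - 1 with hσd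
  have hσ : 0 < σ := by linarith
  have hκ : 0 < κ := by linarith
  have hβ : 0 < 1 - β := by linarith
  refine ⟨2 ^ (1 - β) / (1 - β) + 2 ^ β * (2 ^ (1 + σ) / σ), by positivity, ?_⟩
  intro r hr N
  have hr0 : 0 < r := by linarith
  have hpt : ∀ n : ℕ, (1 + (n : ℝ)) ^ (-β) * (r + n) ^ (-κ)
      ≤ (if n < ⌈r⌉₊ then r ^ (-κ) * (1 + (n : ℝ)) ^ (-β) else 0)
        + 2 ^ β * (r + n) ^ (-(1 + σ)) := by
    intro n
    have hn : (0 : ℝ) ≤ n := n.cast_nonneg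
    split_ifs with h
    · have : (r + n) ^ (-κ) ≤ r ^ (-κ) :=
        Real.rpow_le_rpow_of_nonpos hr0 (by linarith) (by linarith)
      have h3 : 0 ≤ 2 ^ β * (r + n) ^ (-(1 + σ)) := by positivity
      have h4 : 0 ≤ (1 + (n : ℝ)) ^ (-β) := by positivity
      nlinarith
    · rw [Nat.lt_ceil, not_lt] at h
      have h3 : (1 + (n : ℝ)) ^ (-β) ≤ 2 ^ β * (r + n) ^ (-β) := by
        rw [Real.rpow_neg (by positivity), Real.rpow_neg (by positivity), ← div_eq_mul_inv, ← one_div,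
          div_le_div_iff₀ (by positivity) (by positivity), one_mul,
          ← Real.mul_rpow (by norm_num) (by positivity)]
        exact Real.rpow_le_rpow (by positivity) (by linarith) h0
      calc _ ≤ 2 ^ β * (r + n) ^ (-β) * (r + n) ^ (-κ) := by gcongr
        _ = 2 ^ β * (r + n) ^ (-(1 + σ)) := by
          rw [mul_assoc, ← Real.rpow_add (by positivity)]
          congr 2
          rw [hσd]; ring
        _ = _ := (zero_add _).symm
  have hA : ∑ n ∈ Finset.range N, (if n < ⌈r⌉₊ then r ^ (-κ) * (1 + (n : ℝ)) ^ (-β) else 0)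
      ≤ 2 ^ (1 - β) / (1 - β) * r ^ (1 - β - κ) := by
    rw [← Finset.sum_filter, ← Finset.mul_sum]
    have hs : ∑ n ∈ (Finset.range N).filter (· < ⌈r⌉₊), (1 + (n : ℝ)) ^ (-β)
        ≤ ∑ n ∈ Finset.range ⌈r⌉₊, 1 / (1 - β) *
          (((n + 1 : ℕ) : ℝ) ^ (1 - β) - ((n : ℕ) : ℝ) ^ (1 - β)) := by
      refine (Finset.sum_le_sum_of_subset_of_nonneg
        (t := Finset.range ⌈r⌉₊) ?_ ?_).trans (Finset.sum_le_sum fun n _ => ?_)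
      · intro n hn
        simp only [Finset.mem_filter] at hn
        exact Finset.mem_range.2 hn.2
      · intro n _ _
        positivity
      · rw [one_div, ← div_eq_inv_mul, le_div_iff₀ hβ, mul_comm]
        push_cast
        exact rpow_neg_le_sub h0 h1 n
    rw [← Finset.mul_sum, Finset.sum_range_sub (fun n : ℕ => (n : ℝ) ^ (1 - β))] at hs
    simp only [Nat.cast_zero, Real.zero_rpow hβ.ne', sub_zero] at hs
    have hc : ((⌈r⌉₊ : ℕ) : ℝ) ^ (1 - β) ≤ 2 ^ (1 - β) * r ^ (1 - β) := by
      rw [← Real.mul_rpow (by norm_num) hr0.le]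
      exact Real.rpow_le_rpow (Nat.cast_nonneg _) (by linarith [Nat.ceil_lt_add_one hr0.le]) hβ.le
    calc _ ≤ r ^ (-κ) * (1 / (1 - β) * (2 ^ (1 - β) * r ^ (1 - β))) := by
          gcongr
          exact hs.trans (by gcongr)
      _ = 2 ^ (1 - β) / (1 - β) * (r ^ (1 - β) * r ^ (-κ)) := by ring
      _ = _ := by rw [← Real.rpow_add hr0]; rfl
  have hB : ∑ n ∈ Finset.range N, 2 ^ β * (r + n) ^ (-(1 + σ))
      ≤ 2 ^ β * (2 ^ (1 + σ) / σ) * r ^ (1 - β - κ) := by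
    rw [← Finset.mul_sum, mul_assoc]
    gcongr
    calc _ ≤ ∑ n ∈ Finset.range N, 2 ^ (1 + σ) / σ *
          ((r + (n : ℕ)) ^ (-σ) - (r + ((n + 1 : ℕ) : ℝ)) ^ (-σ)) := by
          refine Finset.sum_le_sum fun n _ => ?_
          push_cast
          rw [← add_assoc]
          exact rpow_tail_le_sub hσ (by linarith [(n.cast_nonneg : (0 : ℝ) ≤ n)])
      _ = 2 ^ (1 + σ) / σ * (r ^ (-σ) - (r + N) ^ (-σ)) := by
          rw [← Finset.mul_sum, Finset.sum_range_sub' (fun n : ℕ => (r + (n : ℝ)) ^ (-σ))]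
          simp
      _ ≤ 2 ^ (1 + σ) / σ * r ^ (-σ) := by
          gcongr
          have : 0 ≤ (r + N) ^ (-σ) := by positivity
          linarith
      _ = _ := by rw [hσd]; congr 2; ring
  calc _ ≤ _ := Finset.sum_le_sum fun n _ => hpt n
    _ = _ := Finset.sum_add_distrib
    _ ≤ _ := add_le_add hA hB
    _ = _ := by ring

lemma sum_int_le {h : ℝ → ℝ} (hh : ∀ t, 0 ≤ t → 0 ≤ h t) (N : ℕ) :
    ∑ n ∈ Finset.Icc (-(N : ℤ)) N, h |(n : ℝ)| ≤ 2 * ∑ n ∈ Finset.range (N + 1), h n := by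
  classical
  set A := (Finset.range (N + 1)).image (fun n : ℕ => (n : ℤ))
  set B := (Finset.range (N + 1)).image (fun n : ℕ => -(n : ℤ))
  have hsub : Finset.Icc (-(N : ℤ)) N ⊆ A ∪ B := by
    intro n hn
    rw [Finset.mem_Icc] at hn
    rw [Finset.mem_union]
    simp only [A, B, Finset.mem_image, Finset.mem_range]
    rcases le_total 0 n with h | h
    · exact Or.inl ⟨n.toNat, by omega, by omega⟩
    · exact Or.inr ⟨(-n).toNat, by omega, by omega⟩
  have hn : ∀ n : ℤ, 0 ≤ h |(n : ℝ)| := fun n => hh _ (abs_nonneg _)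
  have hA : ∑ n ∈ A, h |(n : ℝ)| = ∑ n ∈ Finset.range (N + 1), h n := by
    rw [Finset.sum_image fun a _ b _ hab => by simpa using hab]
    simp
  have hB : ∑ n ∈ B, h |(n : ℝ)| = ∑ n ∈ Finset.range (N + 1), h n := by
    rw [Finset.sum_image fun a _ b _ hab => by simpa using hab]
    simp
  calc _ ≤ ∑ n ∈ A ∪ B, h |(n : ℝ)| :=
        Finset.sum_le_sum_of_subset_of_nonneg hsub fun n _ _ => hn n
    _ ≤ ∑ n ∈ A ∪ B, h |(n : ℝ)| + ∑ n ∈ A ∩ B, h |(n : ℝ)| :=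
        le_add_of_nonneg_right (Finset.sum_nonneg fun n _ => hn n)
    _ = _ := by rw [Finset.sum_union_inter, hA, hB]; ring

/-- Reduces a sum over `ℤ^d` of radial powers to a product of one-dimensional sums. -/
lemma rpow_neg_le_prod [NeZero d] {b A : ℝ} (hb : 0 ≤ b) {v : Fin d → ℝ} (hv : ∀ i, 0 < v i)
    (h : ∀ i, v i ≤ A) : A ^ (-b) ≤ ∏ i, v i ^ (-(b / d)) := by
  have hd := one_le_cast_d (d := d)
  have hA : 0 < A := lt_of_lt_of_le (hv 0) (h 0)
  calc A ^ (-b) = ∏ _i : Fin d, A ^ (-(b / d)) := by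
        rw [Finset.prod_const, Finset.card_univ, Fintype.card_fin, ← Real.rpow_natCast,
          ← Real.rpow_mul hA.le]
        congr 1
        field_simp
    _ ≤ _ := Finset.prod_le_prod (fun i _ => by positivity) fun i _ =>
        Real.rpow_le_rpow_of_nonpos (hv i) (h i) (by
          have : 0 ≤ b / d := by positivity
          linarith)

/-- The lattice analogue of `∫ ⟨y⟩^{-b} (r + |y|)^{-c} dy ≲ r^{d-b-c}`. -/
lemma lattice_sum_bound [NeZero d] {b c : ℝ} (hb : 0 ≤ b) (hbd : b < d) (hbc : d < b + c) :
    ∃ C > 0, ∀ r : ℝ, 1 ≤ r → ∀ F : Finset (Lat d),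
      ∑ y ∈ F, jap y ^ (-b) * (r + latnorm y) ^ (-c) ≤ C * r ^ (d - b - c) := by
  classical
  have hd := one_le_cast_d (d := d)
  have hd0 : (0 : ℝ) < d := by linarith
  have hc : 0 < c := by linarith
  obtain ⟨C, hC, hS⟩ := sum_nat_bound (β := b / d) (κ := c / d) (by positivity)
    (by rw [div_lt_one hd0]; exact hbd) (by rw [← add_div, one_lt_div hd0]; exact hbc)
  refine ⟨(2 * C) ^ d, by positivity, ?_⟩
  intro r hr F
  have hr0 : 0 < r := by linarith
  set h : ℝ → ℝ := fun t => (1 + t) ^ (-(b / d)) * (r + t) ^ (-(c / d)) with hh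
  have hh0 : ∀ t, 0 ≤ t → 0 ≤ h t := fun t ht => by simp only [hh]; positivity
  have hpt : ∀ y : Lat d, jap y ^ (-b) * (r + latnorm y) ^ (-c) ≤ ∏ i, h |(y i : ℝ)| := by
    intro y
    simp only [hh]
    rw [Finset.prod_mul_distrib]
    have hy : ∀ i, |(y i : ℝ)| ≤ latnorm y := fun i => abs_le_vnorm (fun i => (y i : ℝ)) i
    have h1 := rpow_neg_le_prod (A := jap y) hb (v := fun i => 1 + |(y i : ℝ)|)
      (fun i => by positivity) (fun i => by unfold jap; linarith [hy i])
    have h2 := rpow_neg_le_prod (A := r + latnorm y) hc.le (v := fun i => r + |(y i : ℝ)|)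
      (fun i => by positivity) (fun i => by linarith [hy i])
    have := latnorm_nonneg y
    exact mul_le_mul h1 h2 (by positivity) (Finset.prod_nonneg fun i _ => by positivity)
  obtain ⟨N, hN⟩ : ∃ N : ℕ, ∀ y ∈ F, ∀ i, |y i| ≤ N := by
    refine ⟨∑ y ∈ F, ∑ i, (y i).natAbs, fun y hy i => ?_⟩
    have h1 := Finset.single_le_sum (f := fun y : Lat d => ∑ i, (y i).natAbs)
      (fun _ _ => Nat.zero_le _) hy
    have h2 := Finset.single_le_sum (f := fun i => (y i).natAbs)
      (fun _ _ => Nat.zero_le _) (Finset.mem_univ i)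
    rw [Int.abs_eq_natAbs]
    exact_mod_cast h2.trans h1
  have hsub : F ⊆ Fintype.piFinset fun _ : Fin d => Finset.Icc (-(N : ℤ)) N := by
    intro y hy
    rw [Fintype.mem_piFinset]
    intro i
    rw [Finset.mem_Icc]
    exact abs_le.1 (hN y hy i)
  calc ∑ y ∈ F, jap y ^ (-b) * (r + latnorm y) ^ (-c)
      ≤ ∑ y ∈ F, ∏ i, h |(y i : ℝ)| := Finset.sum_le_sum fun y _ => hpt y
    _ ≤ ∑ y ∈ Fintype.piFinset fun _ : Fin d => Finset.Icc (-(N : ℤ)) N, ∏ i, h |(y i : ℝ)| :=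
        Finset.sum_le_sum_of_subset_of_nonneg hsub fun y _ _ =>
          Finset.prod_nonneg fun i _ => hh0 _ (abs_nonneg _)
    _ = ∏ _i : Fin d, ∑ n ∈ Finset.Icc (-(N : ℤ)) N, h |(n : ℝ)| :=
        (Finset.prod_univ_sum (fun _ : Fin d => Finset.Icc (-(N : ℤ)) N)
          (fun _ n => h |(n : ℝ)|)).symm
    _ ≤ ∏ _i : Fin d, (2 * C * r ^ (1 - b / d - c / d)) := by
        refine Finset.prod_le_prod (fun i _ => Finset.sum_nonneg fun n _ => hh0 _ (abs_nonneg _))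
          fun i _ => (sum_int_le hh0 N).trans ?_
        rw [mul_assoc]
        gcongr
        exact hS r hr (N + 1)
    _ = _ := by
        rw [Finset.prod_const, Finset.card_univ, Fintype.card_fin, mul_pow, ← Real.rpow_natCast (r ^ _),
          ← Real.rpow_mul hr0.le]
        congr 2
        field_simp

end

/-! ### Schur's test for the commutator kernel -/

section

variable {d : ℕ}

/-- Schur's test, with test function `P`. -/
lemma schur_test {ι κ : Type*} {p C : ℝ} (hp : 1 < p) (hC : 0 ≤ C) (X : Finset ι) (Y : Finset κ)
    {H : ι → κ → ℝ} (hH : ∀ x y, 0 ≤ H x y) {P : ι → ℝ} {Q : κ → ℝ} (hP : ∀ x, 0 < P x)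
    (hQ : ∀ y, 0 < Q y) (h1 : ∀ x, ∑ y ∈ Y, H x y * Q y ≤ C * P x)
    (h2 : ∀ y, ∑ x ∈ X, H x y * P x ^ (p - 1) ≤ C * Q y ^ (p - 1)) {f : κ → ℝ}
    (hf : ∀ y, 0 ≤ f y) :
    ∑ x ∈ X, (∑ y ∈ Y, H x y * f y) ^ p ≤ C ^ (p - 1) * C * ∑ y ∈ Y, f y ^ p := by
  have hp0 : 0 < p := by linarith
  have step : ∀ x, (∑ y ∈ Y, H x y * f y) ^ p
      ≤ C ^ (p - 1) * ∑ y ∈ Y, (H x y * P x ^ (p - 1)) * (f y ^ p / Q y ^ (p - 1)) := by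
    intro x
    have hW : ∀ y, 0 ≤ H x y * Q y := fun y => mul_nonneg (hH x y) (hQ y).le
    have hF : ∀ y, 0 ≤ f y / Q y := fun y => div_nonneg (hf y) (hQ y).le
    have hh := Real.inner_le_weight_mul_Lp_of_nonneg Y hp.le (fun y => H x y * Q y)
      (fun y => f y / Q y) hW hF
    have e1 : ∀ y, H x y * Q y * (f y / Q y) = H x y * f y := fun y => by
      have := (hQ y).ne'
      field_simp
    simp_rw [e1] at hh
    have hS0 : 0 ≤ ∑ y ∈ Y, H x y * Q y := Finset.sum_nonneg fun y _ => hW y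
    have hT0 : 0 ≤ ∑ y ∈ Y, H x y * Q y * (f y / Q y) ^ p :=
      Finset.sum_nonneg fun y _ => mul_nonneg (hW y) (Real.rpow_nonneg (hF y) _)
    have h0 : 0 ≤ ∑ y ∈ Y, H x y * f y := Finset.sum_nonneg fun y _ => mul_nonneg (hH x y) (hf y)
    calc (∑ y ∈ Y, H x y * f y) ^ p
        ≤ ((∑ y ∈ Y, H x y * Q y) ^ (1 - p⁻¹) * (∑ y ∈ Y, H x y * Q y * (f y / Q y) ^ p) ^ p⁻¹) ^ p :=
          Real.rpow_le_rpow h0 hh hp0.le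
      _ = (∑ y ∈ Y, H x y * Q y) ^ (p - 1) * ∑ y ∈ Y, H x y * Q y * (f y / Q y) ^ p := by
          rw [Real.mul_rpow (by positivity) (by positivity), ← Real.rpow_mul hS0, ← Real.rpow_mul hT0,
            inv_mul_cancel₀ hp0.ne', Real.rpow_one, sub_mul, inv_mul_cancel₀ hp0.ne', one_mul]
      _ ≤ (C * P x) ^ (p - 1) * ∑ y ∈ Y, H x y * Q y * (f y / Q y) ^ p := by
          gcongr
          exact h1 x
      _ = _ := by
          rw [Real.mul_rpow hC (hP x).le, mul_assoc, Finset.mul_sum]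
          congr 1
          refine Finset.sum_congr rfl fun y _ => ?_
          have hq := hQ y
          rw [Real.div_rpow (hf y) hq.le, Real.rpow_sub_one hq.ne']
          have : Q y ^ p ≠ 0 := (Real.rpow_pos_of_pos hq p).ne'
          field_simp
  calc _ ≤ ∑ x ∈ X, C ^ (p - 1) * ∑ y ∈ Y, (H x y * P x ^ (p - 1)) * (f y ^ p / Q y ^ (p - 1)) :=
        Finset.sum_le_sum fun x _ => step x
    _ = C ^ (p - 1) * ∑ y ∈ Y, (∑ x ∈ X, H x y * P x ^ (p - 1)) * (f y ^ p / Q y ^ (p - 1)) := by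
        rw [← Finset.mul_sum, Finset.sum_comm]
        simp_rw [Finset.sum_mul]
    _ ≤ C ^ (p - 1) * ∑ y ∈ Y, C * f y ^ p := by
        refine mul_le_mul_of_nonneg_left (Finset.sum_le_sum fun y _ => ?_) (Real.rpow_nonneg hC _)
        have hq := Real.rpow_pos_of_pos (hQ y) (p - 1)
        have hfp := Real.rpow_nonneg (hf y) p
        calc _ ≤ C * Q y ^ (p - 1) * (f y ^ p / Q y ^ (p - 1)) :=
              mul_le_mul_of_nonneg_right (h2 y) (by positivity)
          _ = _ := by field_simp
    _ = _ := by rw [← Finset.mul_sum]; ring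

/-- Size of the kernel of the commutator of a Calderón–Zygmund operator with the weight `⟨x⟩^a`. -/
def commK (a : ℝ) (x y : Lat d) : ℝ := jap (x - y) ^ (-(d : ℝ)) * |(jap x / jap y) ^ a - 1|

lemma commK_nonneg (a : ℝ) (x y : Lat d) : 0 ≤ commK a x y :=
  mul_nonneg (Real.rpow_nonneg (jap_pos _).le _) (abs_nonneg _)

lemma jap_le_add (x y : Lat d) : jap x ≤ jap y + latnorm (x - y) := by
  have := latnorm_add_le y (x - y)
  rw [add_sub_cancel] at this
  unfold jap
  linarith

lemma jap_le_add' (x y : Lat d) : jap y ≤ jap x + latnorm (x - y) := by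
  have := jap_le_add y x
  rwa [← latnorm_neg, neg_sub] at this

lemma latnorm_sub_le (x y : Lat d) : latnorm (x - y) ≤ jap x + jap y := by
  have := latnorm_add_le x (-y)
  rw [latnorm_neg, ← sub_eq_add_neg] at this
  unfold jap
  linarith

/-- Near the diagonal the commutator kernel gains one power; away from it, it has the size of a
Hardy-type kernel. -/
lemma commK_cases [NeZero d] {a : ℝ} (ha0 : 0 ≤ a) (ha1 : a ≤ 1) (x y : Lat d) :
    (jap x ≤ 2 * jap y ∧ jap y ≤ 2 * jap x ∧
      commK a x y ≤ jap (x - y) ^ (-((d : ℝ) - 1)) * (1 / jap y)) ∨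
    commK a x y ≤ 2 * 4 ^ (d : ℝ) * ((jap x + jap y) ^ (-((d : ℝ) - a)) * jap y ^ (-a)) := by
  have hx := jap_pos x
  have hy := jap_pos y
  have hz := jap_pos (x - y)
  have t1 := jap_le_add x y
  have t2 := jap_le_add' x y
  have hzl : jap (x - y) = latnorm (x - y) + 1 := rfl
  by_cases h : jap x ≤ 2 * jap y ∧ jap y ≤ 2 * jap x
  · left
    refine ⟨h.1, h.2, ?_⟩
    have h1 := abs_rpow_sub_one_le (t := jap x / jap y) (by positivity) ha0 ha1
    have h2 : |jap x / jap y - 1| ≤ jap (x - y) / jap y := by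
      rw [div_sub_one hy.ne', abs_div, abs_of_pos hy]
      gcongr
      rw [abs_le]
      constructor <;> linarith
    unfold commK
    calc _ ≤ jap (x - y) ^ (-(d : ℝ)) * (jap (x - y) / jap y) := by gcongr; exact h1.trans h2
      _ = jap (x - y) ^ (-(d : ℝ)) * jap (x - y) * (1 / jap y) := by ring
      _ = _ := by
        congr 1
        rw [show -((d : ℝ) - 1) = -(d : ℝ) + 1 by ring, Real.rpow_add_one hz.ne']
  · right
    have hfar : (jap x + jap y) / 4 ≤ jap (x - y) := by
      rw [not_and_or, not_le, not_le] at h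
      rcases h with h | h <;> linarith
    have hk : jap (x - y) ^ (-(d : ℝ)) ≤ 4 ^ (d : ℝ) * (jap x + jap y) ^ (-(d : ℝ)) := by
      calc _ ≤ ((jap x + jap y) / 4) ^ (-(d : ℝ)) :=
            Real.rpow_le_rpow_of_nonpos (by positivity) hfar (by simp)
        _ = _ := by
          rw [Real.div_rpow (by positivity) (by norm_num), Real.rpow_neg (x := 4) (by norm_num),
            div_inv_eq_mul, mul_comm]
    have hA : 1 ≤ ((jap x + jap y) / jap y) ^ a := by
      apply Real.one_le_rpow _ ha0
      rw [le_div_iff₀ hy]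
      linarith
    have hB : (jap x / jap y) ^ a ≤ ((jap x + jap y) / jap y) ^ a := by
      apply Real.rpow_le_rpow (by positivity) _ ha0
      gcongr
      linarith
    have hB0 : 0 ≤ (jap x / jap y) ^ a := by positivity
    have hC : |(jap x / jap y) ^ a - 1| ≤ 2 * ((jap x + jap y) / jap y) ^ a := by
      rw [abs_le]
      constructor <;> linarith
    unfold commK
    calc _ ≤ 4 ^ (d : ℝ) * (jap x + jap y) ^ (-(d : ℝ)) * (2 * ((jap x + jap y) / jap y) ^ a) := by
          gcongr
      _ = 2 * 4 ^ (d : ℝ) * ((jap x + jap y) ^ (-(d : ℝ)) * ((jap x + jap y) / jap y) ^ a) := by ring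
      _ = _ := by
        congr 1
        rw [Real.div_rpow (by positivity) hy.le, Real.rpow_neg hy.le,
          show -((d : ℝ) - a) = -(d : ℝ) + a by ring, Real.rpow_add (by positivity)]
        ring

lemma rpow_neg_compare {A B σ : ℝ} (hA : 0 < A) (h : A ≤ 2 * B) (hσ : 0 ≤ σ) :
    B ^ (-σ) ≤ 2 ^ σ * A ^ (-σ) := by
  calc B ^ (-σ) ≤ (A / 2) ^ (-σ) :=
        Real.rpow_le_rpow_of_nonpos (by positivity) (by linarith) (by linarith)
    _ = _ := by
      rw [Real.div_rpow hA.le (by norm_num), Real.rpow_neg (x := 2) (by norm_num), div_inv_eq_mul,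
        mul_comm]

/-- Near the diagonal, `1 / B` may be replaced by an expression with enough decay in `L` to make the
Schur sums converge. -/
lemma inv_le_near {A B L : ℝ} (hA : 0 < A) (hB : 0 < B) (hL : 0 ≤ L) (h1 : A ≤ 2 * B)
    (h2 : B ≤ 2 * A) (h3 : L ≤ A + B) : 1 / B ≤ 32 * (A * (A + L) ^ (-(2 : ℝ))) := by
  have hAL : A + L ≤ 4 * A := by linarith
  rw [Real.rpow_neg (by positivity), Real.rpow_two, ← div_eq_mul_inv, mul_div_assoc',
    div_le_div_iff₀ hB (by positivity), one_mul]
  calc (A + L) ^ 2 ≤ (4 * A) ^ 2 := by gcongr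
    _ = 32 * A * (A / 2) := by ring
    _ ≤ 32 * A * B := by gcongr; linarith

lemma sum_sub_left (φ : Lat d → ℝ) {C : ℝ} (h : ∀ F : Finset (Lat d), ∑ z ∈ F, φ z ≤ C)
    (Y : Finset (Lat d)) (x : Lat d) : ∑ y ∈ Y, φ (x - y) ≤ C := by
  classical
  have := h (Y.image fun y => x - y)
  rwa [Finset.sum_image fun a _ b _ hab => by simpa using hab] at this

lemma sum_sub_right (φ : Lat d → ℝ) {C : ℝ} (h : ∀ F : Finset (Lat d), ∑ z ∈ F, φ z ≤ C)
    (X : Finset (Lat d)) (y : Lat d) : ∑ x ∈ X, φ (x - y) ≤ C := by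
  classical
  have := h (X.image fun x => x - y)
  rwa [Finset.sum_image fun a _ b _ hab => by simpa using hab] at this

/-- Row sums of `commK` against a power. -/
lemma schur_row [NeZero d] {a σ : ℝ} (ha0 : 0 ≤ a) (ha1 : a < 1) (hσ0 : 0 < σ)
    (hσ : σ < d - a) : ∃ C > 0, ∀ (x : Lat d) (Y : Finset (Lat d)),
      ∑ y ∈ Y, commK a x y * jap y ^ (-σ) ≤ C * jap x ^ (-σ) := by
  have hd := one_le_cast_d (d := d)
  obtain ⟨C₁, hC₁, hS₁⟩ := lattice_sum_bound (d := d) (b := d - 1) (c := 2) (by linarith)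
    (by linarith) (by linarith)
  obtain ⟨C₂, hC₂, hS₂⟩ := lattice_sum_bound (d := d) (b := a + σ) (c := d - a) (by linarith)
    (by linarith) (by linarith)
  refine ⟨32 * 2 ^ σ * C₁ + 2 * 4 ^ (d : ℝ) * C₂, by positivity, ?_⟩
  intro x Y
  have hx := jap_pos x
  have hpt : ∀ y, commK a x y * jap y ^ (-σ)
      ≤ 32 * 2 ^ σ * (jap x ^ (-σ) * jap x) *
          (jap (x - y) ^ (-((d : ℝ) - 1)) * (jap x + latnorm (x - y)) ^ (-(2 : ℝ)))
        + 2 * 4 ^ (d : ℝ) * (jap y ^ (-(a + σ)) * (jap x + latnorm y) ^ (-((d : ℝ) - a))) := by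
    intro y
    have hy := jap_pos y
    have hz := jap_pos (x - y)
    have hly := latnorm_nonneg y
    have hlz := latnorm_nonneg (x - y)
    rcases commK_cases ha0 ha1.le x y with ⟨h1, h2, h3⟩ | h3
    · refine le_trans ?_ (le_add_of_nonneg_right (by positivity))
      calc _ ≤ jap (x - y) ^ (-((d : ℝ) - 1)) *
            (32 * (jap x * (jap x + latnorm (x - y)) ^ (-(2 : ℝ)))) * (2 ^ σ * jap x ^ (-σ)) := by
            refine mul_le_mul (h3.trans ?_) (rpow_neg_compare hx h1 hσ0.le) (by positivity)
              (by positivity)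
            gcongr
            exact inv_le_near hx hy hlz h1 h2 (latnorm_sub_le x y)
        _ = _ := by ring
    · refine le_trans ?_ (le_add_of_nonneg_left (by positivity))
      calc _ ≤ 2 * 4 ^ (d : ℝ) * ((jap x + latnorm y) ^ (-((d : ℝ) - a)) * jap y ^ (-a))
            * jap y ^ (-σ) := by
            refine mul_le_mul_of_nonneg_right (h3.trans ?_) (by positivity)
            gcongr ?_ * (?_ * ?_)
            refine Real.rpow_le_rpow_of_nonpos (by positivity) ?_ (by linarith)
            unfold jap
            linarith
        _ = _ := by
            rw [show -(a + σ) = -a + -σ by ring, Real.rpow_add hy]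
            ring
  refine (Finset.sum_le_sum fun y _ => hpt y).trans ?_
  rw [Finset.sum_add_distrib, ← Finset.mul_sum, ← Finset.mul_sum]
  have k1 := sum_sub_left (fun z => jap z ^ (-((d : ℝ) - 1)) * (jap x + latnorm z) ^ (-(2 : ℝ)))
    (hS₁ (jap x) (one_le_jap x)) Y x
  have k2 := hS₂ (jap x) (one_le_jap x) Y
  calc _ ≤ 32 * 2 ^ σ * (jap x ^ (-σ) * jap x) * (C₁ * jap x ^ ((d : ℝ) - (d - 1) - 2))
        + 2 * 4 ^ (d : ℝ) * (C₂ * jap x ^ (d - (a + σ) - (d - a))) := by gcongr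
    _ = _ := by
      rw [show (d : ℝ) - (d - 1) - 2 = -1 by ring, show d - (a + σ) - (d - a) = -σ by ring,
        Real.rpow_neg_one]
      field_simp

/-- Column sums of `commK` against a power. -/
lemma schur_col [NeZero d] {a τ : ℝ} (ha0 : 0 ≤ a) (ha1 : a < 1) (hτa : a < τ)
    (hτ : τ < d) : ∃ C > 0, ∀ (y : Lat d) (X : Finset (Lat d)),
      ∑ x ∈ X, commK a x y * jap x ^ (-τ) ≤ C * jap y ^ (-τ) := by
  have hd := one_le_cast_d (d := d)
  have hτ0 : 0 ≤ τ := by linarith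
  obtain ⟨C₁, hC₁, hS₁⟩ := lattice_sum_bound (d := d) (b := d - 1) (c := 2) (by linarith)
    (by linarith) (by linarith)
  obtain ⟨C₂, hC₂, hS₂⟩ := lattice_sum_bound (d := d) (b := τ) (c := d - a) (by linarith)
    (by linarith) (by linarith)
  refine ⟨32 * 2 ^ τ * C₁ + 2 * 4 ^ (d : ℝ) * C₂, by positivity, ?_⟩
  intro y X
  have hy := jap_pos y
  have hpt : ∀ x, commK a x y * jap x ^ (-τ)
      ≤ 32 * 2 ^ τ * (jap y ^ (-τ) * jap y) *
          (jap (x - y) ^ (-((d : ℝ) - 1)) * (jap y + latnorm (x - y)) ^ (-(2 : ℝ)))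
        + 2 * 4 ^ (d : ℝ) * jap y ^ (-a) *
          (jap x ^ (-τ) * (jap y + latnorm x) ^ (-((d : ℝ) - a))) := by
    intro x
    have hx := jap_pos x
    have hz := jap_pos (x - y)
    have hlx := latnorm_nonneg x
    have hlz := latnorm_nonneg (x - y)
    rcases commK_cases ha0 ha1.le x y with ⟨h1, h2, h3⟩ | h3
    · refine le_trans ?_ (le_add_of_nonneg_right (by positivity))
      have hL : latnorm (x - y) ≤ 3 * jap y := by linarith [latnorm_sub_le x y]
      have hn : 1 / jap y ≤ 32 * (jap y * (jap y + latnorm (x - y)) ^ (-(2 : ℝ))) := by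
        have hAL : jap y + latnorm (x - y) ≤ 4 * jap y := by linarith
        rw [Real.rpow_neg (by positivity), Real.rpow_two, ← div_eq_mul_inv, mul_div_assoc',
          div_le_div_iff₀ hy (by positivity), one_mul]
        calc (jap y + latnorm (x - y)) ^ 2 ≤ (4 * jap y) ^ 2 := by gcongr
          _ ≤ 32 * jap y * jap y := by nlinarith
      calc _ ≤ jap (x - y) ^ (-((d : ℝ) - 1)) *
            (32 * (jap y * (jap y + latnorm (x - y)) ^ (-(2 : ℝ)))) * (2 ^ τ * jap y ^ (-τ)) := by
            refine mul_le_mul (h3.trans ?_) (rpow_neg_compare hy h2 hτ0) (by positivity)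
              (by positivity)
            gcongr
        _ = _ := by ring
    · refine le_trans ?_ (le_add_of_nonneg_left (by positivity))
      calc _ ≤ 2 * 4 ^ (d : ℝ) * ((jap y + latnorm x) ^ (-((d : ℝ) - a)) * jap y ^ (-a))
            * jap x ^ (-τ) := by
            refine mul_le_mul_of_nonneg_right (h3.trans ?_) (by positivity)
            gcongr ?_ * (?_ * ?_)
            refine Real.rpow_le_rpow_of_nonpos (by positivity) ?_ (by linarith)
            unfold jap
            linarith
        _ = _ := by ring
  refine (Finset.sum_le_sum fun x _ => hpt x).trans ?_
  rw [Finset.sum_add_distrib, ← Finset.mul_sum, ← Finset.mul_sum]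
  have k1 := sum_sub_right (fun z => jap z ^ (-((d : ℝ) - 1)) * (jap y + latnorm z) ^ (-(2 : ℝ)))
    (hS₁ (jap y) (one_le_jap y)) X y
  have k2 := hS₂ (jap y) (one_le_jap y) X
  calc _ ≤ 32 * 2 ^ τ * (jap y ^ (-τ) * jap y) * (C₁ * jap y ^ ((d : ℝ) - (d - 1) - 2))
        + 2 * 4 ^ (d : ℝ) * jap y ^ (-a) * (C₂ * jap y ^ (d - τ - (d - a))) := by gcongr
    _ = _ := by
      rw [show (d : ℝ) - (d - 1) - 2 = -1 by ring, show d - τ - (d - a) = -τ + a by ring,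
        Real.rpow_neg_one, Real.rpow_add hy, Real.rpow_neg hy.le a]
      have := Real.rpow_pos_of_pos hy a
      field_simp

/-- The commutator kernel is bounded on `ℓ^p`. The range `γ = a p < d (p - 1)` is exactly what leaves
room for a power test function in Schur's test. -/
lemma commK_bound [NeZero d] {p a : ℝ} (hp : 1 < p) (ha0 : 0 ≤ a) (ha1 : a < 1)
    (hap : a * p < d * (p - 1)) : ∃ C > 0, ∀ (X Y : Finset (Lat d)) (f : Lat d → ℝ), (∀ y, 0 ≤ f y) →
      ∑ x ∈ X, (∑ y ∈ Y, commK a x y * f y) ^ p ≤ C * ∑ y ∈ Y, f y ^ p := by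
  have hd := one_le_cast_d (d := d)
  have hp1 : 0 < p - 1 := by linarith
  -- the exponent must be admissible for the row sums (`σ`) and the column sums (`σ (p - 1)`)
  obtain ⟨σ, hσ1, hσ2⟩ : ∃ σ, a / (p - 1) < σ ∧ σ < min (d / (p - 1)) (d - a) := by
    apply exists_between
    rw [lt_min_iff]
    constructor
    · gcongr; linarith
    · rw [div_lt_iff₀ hp1]; linarith
  rw [lt_min_iff, lt_div_iff₀ hp1] at hσ2
  have hσ3 := hσ1
  rw [div_lt_iff₀ hp1] at hσ1
  have hσ0 : 0 < σ := lt_of_le_of_lt (by positivity) hσ3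
  obtain ⟨C₁, hC₁, hR⟩ := schur_row (d := d) ha0 ha1 hσ0 hσ2.2
  obtain ⟨C₂, hC₂, hK⟩ := schur_col (d := d) ha0 ha1 hσ1 hσ2.1
  refine ⟨(max C₁ C₂) ^ (p - 1) * max C₁ C₂, by positivity, ?_⟩
  intro X Y f hf
  have e : ∀ x : Lat d, (jap x ^ (-σ)) ^ (p - 1) = jap x ^ (-(σ * (p - 1))) := fun x => by
    rw [← Real.rpow_mul (jap_pos x).le]
    congr 1
    ring
  refine schur_test hp (by positivity) X Y (commK_nonneg a) (P := fun x => jap x ^ (-σ))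
    (Q := fun x => jap x ^ (-σ)) (fun x => Real.rpow_pos_of_pos (jap_pos x) _)
    (fun x => Real.rpow_pos_of_pos (jap_pos x) _) (fun x => ?_) (fun y => ?_) hf
  · refine (hR x Y).trans ?_
    have := Real.rpow_pos_of_pos (jap_pos x) (-σ)
    gcongr
    exact le_max_left _ _
  · simp only [e]
    refine (hK y X).trans ?_
    have := Real.rpow_pos_of_pos (jap_pos y) (-(σ * (p - 1)))
    gcongr
    exact le_max_right _ _

end

/-! ### The weighted bound and the walk expansion of the solution -/

section

variable {d : ℕ}

/-- Weighted bound for the truncated operators: conjugating with the weight `⟨x⟩^(γ/p)` costs only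
the commutator, whose kernel `commK` is bounded on `ℓ^p`. -/
lemma weighted_bound [NeZero d] {p γ : ℝ} (hp : 1 < p) (hγ0 : 0 ≤ γ) (hγ1 : γ < 1)
    (hγ : γ < d * (p - 1)) :
    ∃ C : ℝ, 0 < C ∧ ∀ (ρ : ℝ), 0 ≤ ρ → ρ ≤ 1 → ∀ (M : ℕ) (i j : Fin d) (f : Lat d → ℝ), FS f →
      ∀ X : Finset (Lat d), ∑ x ∈ X, |opT ρ M i j f x| ^ p * jap x ^ γ
        ≤ C * ∑' x, |f x| ^ p * jap x ^ γ := by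
  have hp0 : 0 < p := by linarith
  set a := γ / p with ha
  have hap : a * p = γ := div_mul_cancel₀ _ hp0.ne'
  have ha0 : 0 ≤ a := div_nonneg hγ0 hp0.le
  have ha1 : a < 1 := by rw [ha, div_lt_one hp0]; linarith
  obtain ⟨C₁, hC₁, h₁⟩ := lp_bound (d := d) hp
  obtain ⟨C₂, hC₂, h₂⟩ := kernel_bound (d := d)
  obtain ⟨C₃, hC₃, h₃⟩ := commK_bound (d := d) hp ha0 ha1 (by rw [hap]; exact hγ)
  have hC : 0 < 2 ^ p * (C₁ + C₂ ^ p * C₃) := by positivity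
  refine ⟨_, hC, fun ρ hρ0 hρ1 M i j f hf X => ?_⟩
  set Y := hf.toFinset
  have hY : ∀ x, f x ≠ 0 → x ∈ Y := fun x hx => (Set.Finite.mem_toFinset hf).2 hx
  set h : Lat d → ℝ := fun y => f y * jap y ^ a with hh
  have hfh : FS h := hf.mul_left _
  have hYh : ∀ x, h x ≠ 0 → x ∈ Y := fun x hx => hY x fun h0 => hx (by simp [hh, h0])
  have hpow : ∀ x : Lat d, (jap x ^ a) ^ p = jap x ^ γ := fun x => by
    rw [← Real.rpow_mul (jap_pos x).le, hap]
  have habs : ∀ x, |h x| ^ p = |f x| ^ p * jap x ^ γ := fun x => by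
    have := (Real.rpow_pos_of_pos (jap_pos x) a)
    rw [hh, abs_mul, abs_of_pos this, Real.mul_rpow (abs_nonneg _) this.le, hpow]
  have hsum : ∑ y ∈ Y, |h y| ^ p = ∑' x, |f x| ^ p * jap x ^ γ := by
    simp_rw [← habs]
    refine (tsum_eq_sum fun x hx => ?_).symm
    have : h x = 0 := by
      by_contra h0
      exact hx (hYh x h0)
    rw [this, abs_zero, Real.zero_rpow hp0.ne']
  have key : ∀ x, |opT ρ M i j f x| * jap x ^ a
      ≤ |opT ρ M i j h x| + C₂ * ∑ y ∈ Y, commK a x y * |h y| := by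
    intro x
    have hjx := Real.rpow_pos_of_pos (jap_pos x) a
    have e : opT ρ M i j f x * jap x ^ a = opT ρ M i j h x
        + ∑ y ∈ Y, (f y * opT ρ M i j (dirac0 d) (x - y)) * (jap x ^ a - jap y ^ a) := by
      rw [opT_conv ρ M i j hY x, opT_conv ρ M i j hYh x, Finset.sum_mul, ← Finset.sum_add_distrib]
      exact Finset.sum_congr rfl fun y _ => by simp only [hh]; ring
    calc |opT ρ M i j f x| * jap x ^ a = |opT ρ M i j f x * jap x ^ a| := by
          rw [abs_mul, abs_of_pos hjx]
      _ ≤ |opT ρ M i j h x|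
          + |∑ y ∈ Y, (f y * opT ρ M i j (dirac0 d) (x - y)) * (jap x ^ a - jap y ^ a)| := by
          rw [e]; exact abs_add_le _ _
      _ ≤ _ := by
          gcongr
          refine (Finset.abs_sum_le_sum_abs _ _).trans ?_
          rw [Finset.mul_sum]
          refine Finset.sum_le_sum fun y _ => ?_
          have hjy := Real.rpow_pos_of_pos (jap_pos y) a
          have e2 : jap x ^ a - jap y ^ a = ((jap x / jap y) ^ a - 1) * jap y ^ a := by
            rw [Real.div_rpow (jap_pos x).le (jap_pos y).le]
            field_simp
          have hk := h₂ ρ hρ0 hρ1 M i j (x - y)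
          rw [div_eq_mul_inv, ← Real.rpow_natCast, ← Real.rpow_neg (jap_pos _).le] at hk
          rw [e2, abs_mul, abs_mul, abs_mul, abs_of_pos hjy]
          simp only [hh, commK]
          rw [abs_mul, abs_of_pos hjy]
          calc |f y| * |opT ρ M i j (dirac0 d) (x - y)| * (|(jap x / jap y) ^ a - 1| * jap y ^ a)
              ≤ |f y| * (C₂ * jap (x - y) ^ (-(d : ℝ))) * (|(jap x / jap y) ^ a - 1| * jap y ^ a) := by
                gcongr
            _ = _ := by ring
  have hS0 : ∀ x, 0 ≤ ∑ y ∈ Y, commK a x y * |h y| := fun x =>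
    Finset.sum_nonneg fun y _ => mul_nonneg (commK_nonneg _ _ _) (abs_nonneg _)
  calc ∑ x ∈ X, |opT ρ M i j f x| ^ p * jap x ^ γ
      ≤ ∑ x ∈ X, 2 ^ p * (|opT ρ M i j h x| ^ p
          + C₂ ^ p * (∑ y ∈ Y, commK a x y * |h y|) ^ p) := by
        refine Finset.sum_le_sum fun x _ => ?_
        have hjx := Real.rpow_pos_of_pos (jap_pos x) a
        rw [← hpow, ← Real.mul_rpow (abs_nonneg _) hjx.le, ← Real.mul_rpow hC₂.le (hS0 x)]
        refine (Real.rpow_le_rpow (by positivity) (key x) hp0.le).trans ?_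
        exact add_rpow_le_two (abs_nonneg _) (mul_nonneg hC₂.le (hS0 x)) hp0.le
    _ = 2 ^ p * (∑ x ∈ X, |opT ρ M i j h x| ^ p
          + C₂ ^ p * ∑ x ∈ X, (∑ y ∈ Y, commK a x y * |h y|) ^ p) := by
        rw [← Finset.mul_sum, Finset.sum_add_distrib, Finset.mul_sum X]
    _ ≤ 2 ^ p * (C₁ * ∑' x, |h x| ^ p + C₂ ^ p * (C₃ * ∑ y ∈ Y, |h y| ^ p)) := by
        gcongr
        · exact h₁ ρ hρ0 hρ1 M i j h hfh X
        · exact h₃ X Y (fun y => |h y|) fun y => abs_nonneg _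
    _ = _ := by
        rw [hsum]
        simp_rw [habs]
        ring

lemma jap_le_two_mul (x : Lat d) (s : Step d) : jap x ≤ 2 * jap (x + stp s) := by
  have h1 : latnorm (stp s) ≤ 1 := by
    have h0 : ∀ i, latnorm (unitv d i) ≤ 1 := fun i => by
      simp [latnorm, vnorm, unitv]
    rcases s with _ | ⟨i, _ | _⟩
    · simp [stp, latnorm, vnorm]
    · simp only [stp]; rw [latnorm_neg]; exact h0 i
    · exact h0 i
  have h2 := latnorm_add_le (x + stp s) (-stp s)
  rw [add_neg_cancel_right, latnorm_neg] at h2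
  have h3 := latnorm_nonneg (x + stp s)
  unfold jap
  linarith

/-- `avg` is bounded on the weighted space: the weight changes by a bounded factor along a step. -/
lemma weighted_avg [NeZero d] {p γ : ℝ} (hp : 1 < p) (hγ0 : 0 ≤ γ) {f : Lat d → ℝ} (hf : FS f) :
    ∑' x, |avg f x| ^ p * jap x ^ γ ≤ 2 ^ γ * ∑' x, |f x| ^ p * jap x ^ γ := by
  have hp0 : 0 < p := by linarith
  have hF : FS fun x => |f x| ^ p * jap x ^ γ := hf.of_imp fun x hx => by
    simp [hx, Real.zero_rpow hp0.ne']
  have hA : FS fun x => |avg f x| ^ p * jap x ^ γ := hf.avg.of_imp fun x hx => by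
    simp [hx, Real.zero_rpow hp0.ne']
  rw [← tsum_avg hF, ← tsum_mul_left]
  refine hA.summable.tsum_le_tsum (fun x => ?_) (hF.avg.summable.mul_left _)
  have h1 : |avg f x| ^ p ≤ ∑ s : Step d, wt s * |f (x + stp s)| ^ p := by
    refine le_trans (Real.rpow_le_rpow (abs_nonneg _) ?_ hp0.le)
      (Real.rpow_arith_mean_le_arith_mean_rpow _ wt (fun s => |f (x + stp s)|)
        (fun s _ => wt_nonneg s) wt_sum (fun s _ => abs_nonneg _) hp.le)
    refine (Finset.abs_sum_le_sum_abs _ _).trans (le_of_eq ?_)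
    exact Finset.sum_congr rfl fun s _ => by rw [abs_mul, abs_of_nonneg (wt_nonneg s)]
  have hj := Real.rpow_nonneg (jap_pos x).le γ
  refine (mul_le_mul_of_nonneg_right h1 hj).trans ?_
  rw [avg, Finset.sum_mul, Finset.mul_sum]
  refine Finset.sum_le_sum fun s _ => ?_
  have h2 : jap x ^ γ ≤ 2 ^ γ * jap (x + stp s) ^ γ := by
    rw [← Real.mul_rpow (by norm_num) (jap_pos _).le]
    exact Real.rpow_le_rpow (jap_pos x).le (jap_le_two_mul x s) hγ0
  have h3 := wt_nonneg s
  calc wt s * |f (x + stp s)| ^ p * jap x ^ γ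
      ≤ wt s * |f (x + stp s)| ^ p * (2 ^ γ * jap (x + stp s) ^ γ) := by gcongr
    _ = _ := by ring

lemma iter_lin {ι : Type*} (t : Finset ι) (c : ℝ) (f : Lat d → ℝ) (h : ι → Lat d → ℝ) (k : ℕ) :
    avg^[k] (fun x => c * f x + ∑ j ∈ t, h j x)
      = fun x => c * avg^[k] f x + ∑ j ∈ t, avg^[k] (h j) x := by
  induction k with
  | zero => rfl
  | succ k ih =>
    simp only [Function.iterate_succ_apply', ih]
    funext x
    simp only [avg, mul_add, Finset.sum_add_distrib, Finset.mul_sum]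
    rw [Finset.sum_comm (s := Finset.univ) (t := t)]
    congr 1
    exact Finset.sum_congr rfl fun s _ => by ring

lemma abs_iter_le [NeZero d] {u : Lat d → ℝ} {B : ℝ} (hu : ∀ x, |u x| ≤ B) (k : ℕ) (x : Lat d) :
    |avg^[k] u x| ≤ B := by
  induction k generalizing x with
  | zero => exact hu x
  | succ k ih =>
    rw [Function.iterate_succ_apply']
    calc |avg (avg^[k] u) x| ≤ ∑ s : Step d, |wt s * avg^[k] u (x + stp s)| :=
          Finset.abs_sum_le_sum_abs _ _
      _ ≤ ∑ s : Step d, wt s * B := by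
          refine Finset.sum_le_sum fun s _ => ?_
          rw [abs_mul, abs_of_nonneg (wt_nonneg s)]
          exact mul_le_mul_of_nonneg_left (ih _) (wt_nonneg s)
      _ = B := by rw [← Finset.sum_mul, wt_sum, one_mul]

lemma ddiv_dgrad [NeZero d] (u : Lat d → ℝ) (x : Lat d) :
    ddiv (fun y => dgrad u y) x = 8 * d * (u x - avg u x) := by
  have hd : (d : ℝ) ≠ 0 := Nat.cast_ne_zero.2 (NeZero.ne d)
  simp only [ddiv, dgrad, avg]
  rw [sum_step]
  simp only [stp, wt, add_zero, sub_add_cancel, ← sub_eq_add_neg, ← mul_add, ← Finset.mul_sum,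
    Finset.sum_sub_distrib, Finset.sum_add_distrib, Finset.sum_const, Finset.card_univ,
    Fintype.card_fin, nsmul_eq_mul]
  field_simp
  ring

/-- Iterating the fixed point equation `u = ρ avg² u + Σⱼ ∇ⱼ* hⱼ` for bounded `u`. -/
lemma tendsto_opT [NeZero d] {ρ B : ℝ} (hρ0 : 0 ≤ ρ) (hρ1 : ρ < 1) {u : Lat d → ℝ}
    (hu : ∀ x, |u x| ≤ B) {h : Fin d → Lat d → ℝ}
    (he : ∀ x, u x = ρ * avg^[2] u x + ∑ j, bdiff j (h j) x) (i : Fin d) (x : Lat d) :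
    Filter.Tendsto (fun M => ∑ j, opT ρ M i j (h j) x) Filter.atTop (nhds (dgrad u x i)) := by
  have hexp : ∀ M : ℕ, ∀ x, u x = ρ ^ M * avg^[2 * M] u x
      + ∑ k ∈ Finset.range M, ρ ^ k * ∑ j, bdiff j (avg^[2 * k] (h j)) x := by
    intro M
    induction M with
    | zero => intro x; simp
    | succ M ih =>
      intro x
      have hs : avg^[2 * M] u x
          = ρ * avg^[2 * (M + 1)] u x + ∑ j, bdiff j (avg^[2 * M] (h j)) x := by
        conv_lhs => rw [show u = fun x => ρ * avg^[2] u x + ∑ j, bdiff j (h j) x from funext he]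
        rw [iter_lin]
        simp only [iter_bdiff]
        rw [← Function.iterate_add_apply, mul_add, mul_one]
      rw [Finset.sum_range_succ, pow_succ]
      conv_lhs => rw [ih x, hs]
      ring
  have hM : ∀ M : ℕ, ∑ j, opT ρ M i j (h j) x
      = dgrad u x i - ρ ^ M * fdiff i (avg^[2 * M] u) x := by
    intro M
    have h1 := hexp M x
    have h2 := hexp M (x + unitv d i)
    have h3 : ∑ j, opT ρ M i j (h j) x
        = ∑ k ∈ Finset.range M, ρ ^ k * ∑ j, bdiff j (avg^[2 * k] (h j)) (x + unitv d i)
          - ∑ k ∈ Finset.range M, ρ ^ k * ∑ j, bdiff j (avg^[2 * k] (h j)) x := by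
      simp only [opT, fdiff]
      rw [Finset.sum_comm, ← Finset.sum_sub_distrib]
      refine Finset.sum_congr rfl fun k _ => ?_
      rw [← mul_sub, ← Finset.sum_sub_distrib, Finset.mul_sum]
    simp only [dgrad, fdiff]
    rw [h3]
    linarith
  simp_rw [hM]
  rw [← sub_zero (dgrad u x i)]
  simp only [sub_zero]
  nth_rewrite 2 [← sub_zero (dgrad u x i)]
  refine Filter.Tendsto.sub tendsto_const_nhds ?_
  have h0 : Filter.Tendsto (fun M : ℕ => ρ ^ M * (2 * B)) Filter.atTop (nhds 0) := by
    simpa using (tendsto_pow_atTop_nhds_zero_of_lt_one hρ0 hρ1).mul_const (2 * B)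
  refine squeeze_zero_norm (fun M => ?_) h0
  rw [Real.norm_eq_abs, abs_mul, abs_of_nonneg (pow_nonneg hρ0 M)]
  refine mul_le_mul_of_nonneg_left ?_ (pow_nonneg hρ0 M)
  have h1 := abs_iter_le hu (2 * M) x
  have h2 := abs_iter_le hu (2 * M) (x + unitv d i)
  have h3 := abs_sub (avg^[2 * M] u (x + unitv d i)) (avg^[2 * M] u x)
  simp only [fdiff]
  linarith

lemma vnorm_le_sum (v : Fin d → ℝ) : vnorm v ≤ ∑ i, |v i| := by
  unfold vnorm
  rw [Real.sqrt_le_left (Finset.sum_nonneg fun i _ => abs_nonneg _)]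
  simp_rw [← sq_abs (v _)]
  exact Finset.sum_sq_le_sq_sum_of_nonneg fun i _ => abs_nonneg _

end

/-- Proposition 1: discrete weighted Calderón–Zygmund estimate for
the constant-coefficient operator `(1/T) + ∇*∇`, uniformly in `T`. -/
theorem statement14 (d : ℕ) (hd : 2 ≤ d) (p γ : ℝ) (hp : 1 < p) (hγ0 : 0 ≤ γ)
    (hγ : γ < min ((d : ℝ) * (p - 1)) (1 / 2)) :
    ∃ C : ℝ, 0 < C ∧
      ∀ T : ℝ, 0 < T →
      ∀ g : Lat d → Fin d → ℝ, (Function.support g).Finite →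
      ∀ u : Lat d → ℝ, Summable (fun x => (u x) ^ 2) →
        (∀ x : Lat d, (1 / T) * u x + ddiv (fun y => dgrad u y) x = ddiv g x) →
        Summable (fun x : Lat d => vnorm (dgrad u x) ^ p * (latnorm x + 1) ^ γ) ∧
        ∑' x : Lat d, vnorm (dgrad u x) ^ p * (latnorm x + 1) ^ γ
          ≤ C * ∑' x : Lat d, vnorm (g x) ^ p * (latnorm x + 1) ^ γ := by
  have : NeZero d := ⟨by omega⟩
  have hd1 := one_le_cast_d (d := d)
  have hp0 : 0 < p := by linarith
  have hγ1 : γ < 1 := by linarith [lt_of_lt_of_le hγ (min_le_right _ _)]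
  obtain ⟨C₁, hC₁, hW⟩ := weighted_bound (d := d) hp hγ0 hγ1 (lt_of_lt_of_le hγ (min_le_left _ _))
  have hDpos : (0 : ℝ) < (d : ℝ) ^ (p - 1) := Real.rpow_pos_of_pos (by linarith) _
  set D := (d : ℝ) ^ (p - 1) with hD
  -- bounds the `p`-th power of the weighted norm of the data `hⱼ` of the two-step equation
  set K : ℝ := 2 ^ p * (1 + 2 ^ γ) with hK
  have hKpos : 0 < K := by positivity
  refine ⟨D * (d * (D * (d * (C₁ * K)))), by positivity, fun T hT g hg u hu2 heq => ?_⟩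
  set G := ∑' x : Lat d, vnorm (g x) ^ p * (latnorm x + 1) ^ γ with hG
  have hgj : ∀ j, FS fun x => g x j := fun j => hg.subset fun x hx hgx => hx (by simp [hgx])
  have hGs : Summable fun x : Lat d => vnorm (g x) ^ p * jap x ^ γ := by
    refine summable_of_hasFiniteSupport (hg.subset fun x hx hgx => hx ?_)
    simp only [hgx, vnorm, Pi.zero_apply]
    simp [Real.zero_rpow hp0.ne']
  have hv0 : ∀ v : Fin d → ℝ, 0 ≤ vnorm v := fun v => Real.sqrt_nonneg _
  have hgG : ∀ j, ∑' x, |g x j| ^ p * jap x ^ γ ≤ G := fun j => by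
    have hF : FS fun x => |g x j| ^ p * jap x ^ γ := (hgj j).of_imp fun x hx => by
      simp [hx, Real.zero_rpow hp0.ne']
    refine hF.summable.tsum_le_tsum (fun x => ?_) hGs
    exact mul_le_mul_of_nonneg_right
      (Real.rpow_le_rpow (abs_nonneg _) (abs_le_vnorm (g x) j) hp0.le)
      (Real.rpow_nonneg (jap_pos x).le γ)
  -- the resolvent equation in terms of the walk: `u = r (avg u) + c ∇*g`
  set c : ℝ := 1 / (1 / T + 8 * d) with hc
  set r : ℝ := 8 * d * c with hr
  have hden : 0 < 1 / T + 8 * d := by positivity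
  have hc0 : 0 < c := by positivity
  have hr0 : 0 ≤ r := by positivity
  have hr1 : r < 1 := by
    rw [hr, hc, mul_one_div, div_lt_one hden]
    have : 0 < 1 / T := by positivity
    linarith
  have hc1 : c ≤ 1 := by
    rw [hr] at hr1
    nlinarith
  have hstep : u = fun x => r * avg u x + ∑ j, c * bdiff j (fun y => g y j) x := by
    funext x
    have h1 := heq x
    rw [ddiv_dgrad] at h1
    have h2 : ddiv g x = ∑ j, bdiff j (fun y => g y j) x := rfl
    rw [← Finset.mul_sum, ← h2, ← h1, hr, hc]
    field_simp
    ring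
  -- two steps at once, so that the powers of `avg` are even and can be split evenly in pairings
  set h : Fin d → Lat d → ℝ := fun j x => c * (g x j + r * avg (fun y => g y j) x) with hh
  have htwo : ∀ x, u x = r ^ 2 * avg^[2] u x + ∑ j, bdiff j (h j) x := by
    intro x
    have h1 : avg u = fun x => r * avg (avg u) x
        + ∑ j, c * bdiff j (avg fun y => g y j) x := by
      conv_lhs => rw [hstep]
      have := iter_lin Finset.univ r (avg u) (fun j x => c * bdiff j (fun y => g y j) x) 1
      simp only [Function.iterate_one] at this
      rw [this]
      funext x
      congr 1
      refine Finset.sum_congr rfl fun j _ => ?_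
      rw [← avg_bdiff]
      simp only [avg, Finset.mul_sum]
      exact Finset.sum_congr rfl fun s _ => by ring
    have h2 : u x = _ := congrFun hstep x
    rw [congrFun h1 x] at h2
    rw [h2]
    have h3 : ∀ j, bdiff j (h j) x
        = c * bdiff j (fun y => g y j) x + r * (c * bdiff j (avg fun y => g y j) x) := fun j => by
      simp only [hh, bdiff]; ring
    simp_rw [h3]
    rw [Finset.sum_add_distrib, ← Finset.mul_sum _ _ r]
    simp only [Function.iterate_succ, Function.iterate_zero, Function.comp_apply, id_eq]
    ring
  have hhj : ∀ j, FS (h j) := fun j => by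
    have h1 : FS fun x => r * avg (fun y => g y j) x := (hgj j).avg.of_imp fun x hx => by simp [hx]
    exact ((hgj j).add h1).of_imp fun x hx => by simp only [hh, hx, mul_zero]
  have hhK : ∀ j, ∑' x, |h j x| ^ p * jap x ^ γ ≤ K * G := fun j => by
    have hF : FS fun x => |h j x| ^ p * jap x ^ γ := (hhj j).of_imp fun x hx => by
      simp [hx, Real.zero_rpow hp0.ne']
    have hF1 : FS fun x => |g x j| ^ p * jap x ^ γ := (hgj j).of_imp fun x hx => by
      simp [hx, Real.zero_rpow hp0.ne']
    have hF2 : FS fun x => |avg (fun y => g y j) x| ^ p * jap x ^ γ :=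
      (hgj j).avg.of_imp fun x hx => by simp [hx, Real.zero_rpow hp0.ne']
    calc ∑' x, |h j x| ^ p * jap x ^ γ
        ≤ ∑' x, 2 ^ p * (|g x j| ^ p * jap x ^ γ + |avg (fun y => g y j) x| ^ p * jap x ^ γ) := by
          refine hF.summable.tsum_le_tsum (fun x => ?_)
            ((hF1.summable.add hF2.summable).mul_left _)
          rw [← add_mul, ← mul_assoc]
          refine mul_le_mul_of_nonneg_right ?_ (Real.rpow_nonneg (jap_pos x).le γ)
          refine le_trans (Real.rpow_le_rpow (abs_nonneg _) ?_ hp0.le)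
            (add_rpow_le_two (abs_nonneg _) (abs_nonneg _) hp0.le)
          simp only [hh]
          rw [abs_mul, abs_of_pos hc0]
          have h1 := abs_add_le (g x j) (r * avg (fun y => g y j) x)
          rw [abs_mul, abs_of_nonneg hr0] at h1
          have h2 : r * |avg (fun y => g y j) x| ≤ |avg (fun y => g y j) x| :=
            mul_le_of_le_one_left (abs_nonneg _) hr1.le
          exact (mul_le_of_le_one_left (abs_nonneg _) hc1).trans (by linarith)
      _ = 2 ^ p * (∑' x, |g x j| ^ p * jap x ^ γ
          + ∑' x, |avg (fun y => g y j) x| ^ p * jap x ^ γ) := by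
          rw [tsum_mul_left, hF1.summable.tsum_add hF2.summable]
      _ ≤ 2 ^ p * (G + 2 ^ γ * G) := by
          have h1 := weighted_avg hp hγ0 (hgj j)
          have h2 := hgG j
          gcongr
          exact h1.trans (by gcongr)
      _ = K * G := by rw [hK]; ring
  have huB : ∀ x, |u x| ≤ √(∑' x, u x ^ 2) := fun x =>
    Real.abs_le_sqrt (hu2.le_tsum x fun y _ => sq_nonneg _)
  have hcomp : ∀ (i : Fin d) (X : Finset (Lat d)),
      ∑ x ∈ X, |dgrad u x i| ^ p * jap x ^ γ ≤ D * (d * (C₁ * (K * G))) := by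
    intro i X
    have hlim : Filter.Tendsto
        (fun M => ∑ x ∈ X, |∑ j, opT (r ^ 2) M i j (h j) x| ^ p * jap x ^ γ) Filter.atTop
        (nhds (∑ x ∈ X, |dgrad u x i| ^ p * jap x ^ γ)) :=
      tendsto_finsetSum _ fun x _ =>
        (((tendsto_opT (sq_nonneg r) (by nlinarith) huB htwo i x).abs).rpow_const
          (Or.inr hp0.le)).mul_const _
    refine le_of_tendsto hlim (Filter.Eventually.of_forall fun M => ?_)
    calc ∑ x ∈ X, |∑ j, opT (r ^ 2) M i j (h j) x| ^ p * jap x ^ γ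
        ≤ ∑ x ∈ X, D * ∑ j, |opT (r ^ 2) M i j (h j) x| ^ p * jap x ^ γ := by
          refine Finset.sum_le_sum fun x _ => ?_
          rw [← Finset.sum_mul, ← mul_assoc]
          refine mul_le_mul_of_nonneg_right ?_ (Real.rpow_nonneg (jap_pos x).le γ)
          refine (Real.rpow_le_rpow (abs_nonneg _) (Finset.abs_sum_le_sum_abs _ _) hp0.le).trans ?_
          simpa using Real.rpow_sum_le_const_mul_sum_rpow Finset.univ
            (fun j => opT (r ^ 2) M i j (h j) x) hp.le
      _ = D * ∑ j, ∑ x ∈ X, |opT (r ^ 2) M i j (h j) x| ^ p * jap x ^ γ := by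
          rw [← Finset.mul_sum, Finset.sum_comm]
      _ ≤ D * ∑ _j : Fin d, C₁ * (K * G) := by
          refine mul_le_mul_of_nonneg_left (Finset.sum_le_sum fun j _ => ?_) hDpos.le
          exact (hW (r ^ 2) (sq_nonneg r) (by nlinarith) M i j (h j) (hhj j) X).trans
            (mul_le_mul_of_nonneg_left (hhK j) hC₁.le)
      _ = _ := by simp
  have hfin : ∀ X : Finset (Lat d), ∑ x ∈ X, vnorm (dgrad u x) ^ p * (latnorm x + 1) ^ γ
      ≤ D * (d * (D * (d * (C₁ * K)))) * G := by
    intro X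
    calc ∑ x ∈ X, vnorm (dgrad u x) ^ p * (latnorm x + 1) ^ γ
        ≤ ∑ x ∈ X, D * ∑ i, |dgrad u x i| ^ p * jap x ^ γ := by
          refine Finset.sum_le_sum fun x _ => ?_
          rw [← Finset.sum_mul, ← mul_assoc]
          refine mul_le_mul_of_nonneg_right ?_ (Real.rpow_nonneg (jap_pos x).le γ)
          refine (Real.rpow_le_rpow (hv0 _) (vnorm_le_sum _) hp0.le).trans ?_
          simpa using Real.rpow_sum_le_const_mul_sum_rpow Finset.univ (dgrad u x) hp.le
      _ = D * ∑ i, ∑ x ∈ X, |dgrad u x i| ^ p * jap x ^ γ := by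
          rw [← Finset.mul_sum, Finset.sum_comm]
      _ ≤ D * ∑ _i : Fin d, D * (d * (C₁ * (K * G))) :=
          mul_le_mul_of_nonneg_left (Finset.sum_le_sum fun i _ => hcomp i X) hDpos.le
      _ = _ := by
          simp only [Finset.sum_const, Finset.card_univ, Fintype.card_fin, nsmul_eq_mul]
          ring
  have hnn : 0 ≤ fun x : Lat d => vnorm (dgrad u x) ^ p * (latnorm x + 1) ^ γ := fun x =>
    mul_nonneg (Real.rpow_nonneg (hv0 _) _) (Real.rpow_nonneg (jap_pos x).le _)
  exact ⟨summable_of_sum_le hnn hfin, Real.tsum_le_of_sum_le hnn hfin⟩
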